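/- arXiv:1105.5981 — 6 statements merged into one kernel-verified Lean document; each statement's English description precedes it below -/
import Mathlib

section
/- Let K ≥ 1 and let G_1, …, G_{K+1} be n×n complex matrices with equal determinants such that G_{K+1} is invertible, and define A_i = G_i G_{K+1}^{-1} for i = 1, …, K. Then the following are equivalent: (a) there exist n×n unitary matrices U_1, …, U_{K+1} such that for every i = 1, …, K the matrix T_i := U_iᴴ A_i U_{K+1} is upper triangular with all diagonal entries equal to 1; (b) there exist n×n unitary matrices U_1, …, U_{K+1} and an n×n unitary matrix V such that for every i = 1, …, K+1 the matrix R_i := U_iᴴ G_i V is upper triangular and the diagonals of R_1, …, R_{K+1} all coincide, i.e. (R_i)_{jj} = (R_{K+1})_{jj} for all i and j. Moreover, in passing from (a) to (b) the same matrices U_1, …, U_{K+1} can be kept. -/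
open Matrix

/-- Condition (a): a `K`-GMD of the matrices `A i`, i.e. unitary matrices
`U 0, …, U K` such that each `(U i)ᴴ * A i * U (Fin.last K)` is upper triangular
with all diagonal entries equal to `1`. -/
def KGMDCond (K n : ℕ) (A : Fin K → Matrix (Fin n) (Fin n) ℂ)
    (U : Fin (K + 1) → Matrix (Fin n) (Fin n) ℂ) : Prop :=
  (∀ i, (U i)ᴴ * U i = 1) ∧
  ∀ i : Fin K,
    (∀ k l : Fin n, l < k → ((U i.castSucc)ᴴ * A i * U (Fin.last K)) k l = 0) ∧
    (∀ k : Fin n, ((U i.castSucc)ᴴ * A i * U (Fin.last K)) k k = 1)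

/-- Condition (b): a `(K+1)`-JET of the matrices `G i`, i.e. unitary matrices
`U 0, …, U K` and a unitary matrix `V` such that each `R i := (U i)ᴴ * G i * V`
is upper triangular, and the diagonals of all the `R i` coincide. -/
def JETCond (K n : ℕ) (G : Fin (K + 1) → Matrix (Fin n) (Fin n) ℂ)
    (U : Fin (K + 1) → Matrix (Fin n) (Fin n) ℂ)
    (V : Matrix (Fin n) (Fin n) ℂ) : Prop :=
  (∀ i, (U i)ᴴ * U i = 1) ∧ Vᴴ * V = 1 ∧
  ∀ i : Fin (K + 1),
    (∀ k l : Fin n, l < k → ((U i)ᴴ * G i * V) k l = 0) ∧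
    (∀ j : Fin n,
      ((U i)ᴴ * G i * V) j j = ((U (Fin.last K))ᴴ * G (Fin.last K) * V) j j)

/-!
The triangular factors are tied together by `T i * R last = R i`, where
`T i = (U i)ᴴ * A i * U last` and `R i = (U i)ᴴ * G i * V`: the unitary `U last` and `G last`
cancel. Once `R last` is upper triangular, invertibility of `G last` lets us multiply and divide
by it on the right, so `T i` is upper triangular with unit diagonal exactly when `R i` is upper
triangular with the diagonal of `R last`. A suitable `V` always exists: it is the unitary factor
of an RQ decomposition of `(U last)ᴴ * G last`.
-/

section UpperTriangular

variable {ι α : Type*} [Fintype ι] [LinearOrder ι]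

theorem mul_apply_self_of_isUpperTriangular [NonUnitalNonAssocSemiring α] {M N : Matrix ι ι α}
    (hM : M.IsUpperTriangular) (hN : N.IsUpperTriangular) (j : ι) :
    (M * N) j j = M j j * N j j := by
  rw [Matrix.mul_apply]
  refine Fintype.sum_eq_single j fun k hk => ?_
  rcases hk.lt_or_gt with hkj | hjk
  · rw [hM hkj, zero_mul]
  · rw [hN hjk, mul_zero]

variable [CommRing α] {T R : Matrix ι ι α}

theorem isUnit_apply_self_of_isUpperTriangular (hR : R.IsUpperTriangular) (hunit : IsUnit R)
    (j : ι) : IsUnit (R j j) := by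
  rw [Matrix.isUnit_iff_isUnit_det, Matrix.det_of_isUpperTriangular hR,
    IsUnit.prod_univ_iff] at hunit
  exact hunit j

theorem isUpperTriangular_mul_iff_left (hR : R.IsUpperTriangular) (hunit : IsUnit R) :
    (T * R).IsUpperTriangular ↔ T.IsUpperTriangular := by
  refine ⟨fun hTR => ?_, fun hT => hT.mul hR⟩
  let := hunit.invertible
  rw [← Matrix.mul_inv_cancel_right_of_invertible R T]
  exact hTR.mul (blockTriangular_inv_of_blockTriangular hR)

theorem isUpperTriangular_mul_and_diag_eq_iff (hR : R.IsUpperTriangular) (hunit : IsUnit R) :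
    ((T * R).IsUpperTriangular ∧ ∀ j, (T * R) j j = R j j) ↔
      (T.IsUpperTriangular ∧ ∀ j, T j j = 1) := by
  rw [isUpperTriangular_mul_iff_left hR hunit]
  refine and_congr_right fun hT => forall_congr' fun j => ?_
  rw [mul_apply_self_of_isUpperTriangular hT hR,
    (isUnit_apply_self_of_isUpperTriangular hR hunit j).mul_eq_right]

end UpperTriangular

theorem exists_unitary_mul_isUpperTriangular {𝕜 ι : Type*} [RCLike 𝕜] [Fintype ι] [LinearOrder ι]
    (M : Matrix ι ι 𝕜) : ∃ V ∈ unitaryGroup ι 𝕜, (M * V).IsUpperTriangular := by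
  let : LocallyFiniteOrderBot ιᵒᵈ :=
    .ofIic _ (fun a => Finset.univ.filter (· ≤ a)) (by simp)
  -- Gram–Schmidt runs over the rows of `M` from the last one up, hence the order dual.
  let row (i : ιᵒᵈ) : EuclideanSpace 𝕜 ι := WithLp.toLp 2 (star (M (OrderDual.ofDual i)))
  have hcard : Module.finrank 𝕜 (EuclideanSpace 𝕜 ι) = Fintype.card ιᵒᵈ := by simp
  let b : OrthonormalBasis ιᵒᵈ 𝕜 (EuclideanSpace 𝕜 ι) :=
    InnerProductSpace.gramSchmidtOrthonormalBasis hcard row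
  let c := b.reindex OrderDual.ofDual
  let e := EuclideanSpace.basisFun ι 𝕜
  refine ⟨e.toBasis.toMatrix c, e.toMatrix_orthonormalBasis_mem_unitary c, fun i j hji => ?_⟩
  have horth : inner 𝕜 (row (OrderDual.toDual i)) (c j) = 0 := by
    rw [inner_eq_zero_symm]
    exact InnerProductSpace.gramSchmidtOrthonormalBasis_inv_triangular hcard row hji
  rw [EuclideanSpace.inner_eq_star_dotProduct, dotProduct_comm] at horth
  simpa [row, e, Matrix.mul_apply, dotProduct, Module.Basis.toMatrix_apply] using horth

theorem mul_mul_inv_mul_mul_cancel_of_mul_eq_one {k l m n p α : Type*} [Fintype k] [Fintype l]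
    [Fintype n] [DecidableEq n] [CommRing α] {H : Matrix n n α} {W : Matrix n k α}
    {W' : Matrix k n α} (hH : IsUnit H) (hW : W * W' = 1) (P : Matrix m l α)
    (G : Matrix l n α) (V : Matrix n p α) :
    P * (G * H⁻¹) * W * (W' * H * V) = P * G * V := by
  calc P * (G * H⁻¹) * W * (W' * H * V)
      = P * G * (H⁻¹ * (W * W' * H)) * V := by simp only [Matrix.mul_assoc]
    _ = P * G * V := by
      rw [hW, Matrix.one_mul, Matrix.nonsing_inv_mul _ ((Matrix.isUnit_iff_isUnit_det H).mp hH),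
        Matrix.mul_one]

section Decompositions

variable {K n : ℕ} {G : Fin (K + 1) → Matrix (Fin n) (Fin n) ℂ}
  {A : Fin K → Matrix (Fin n) (Fin n) ℂ}

theorem jetCond_iff_kGMDCond_of_isUpperTriangular (hinv : IsUnit (G (Fin.last K)))
    (hA : ∀ i : Fin K, A i = G i.castSucc * (G (Fin.last K))⁻¹)
    {U : Fin (K + 1) → Matrix (Fin n) (Fin n) ℂ} {V : Matrix (Fin n) (Fin n) ℂ}
    (hV : Vᴴ * V = 1)
    (hR : ((U (Fin.last K))ᴴ * G (Fin.last K) * V).IsUpperTriangular) :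
    JETCond K n G U V ↔ KGMDCond K n A U := by
  refine and_congr_right fun hU => (and_iff_right hV).trans ?_
  have hUlast : U (Fin.last K) * (U (Fin.last K))ᴴ = 1 := mul_eq_one_comm.mp (hU _)
  have hunit : IsUnit ((U (Fin.last K))ᴴ * G (Fin.last K) * V) :=
    ((IsUnit.of_mul_eq_one _ (hU _)).mul hinv).mul (IsUnit.of_mul_eq_one_right _ hV)
  have hfactor (i : Fin K) : (U i.castSucc)ᴴ * A i * U (Fin.last K) *
      ((U (Fin.last K))ᴴ * G (Fin.last K) * V) = (U i.castSucc)ᴴ * G i.castSucc * V := by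
    rw [hA, mul_mul_inv_mul_mul_cancel_of_mul_eq_one hinv hUlast]
  rw [Fin.forall_fin_succ', and_iff_left ⟨fun _ _ hlk => hR hlk, fun _ => rfl⟩]
  refine forall_congr' fun i => ?_
  rw [← hfactor]
  exact isUpperTriangular_mul_and_diag_eq_iff hR hunit

theorem kGMD_iff_jet_general (hinv : IsUnit (G (Fin.last K)))
    (hA : ∀ i : Fin K, A i = G i.castSucc * (G (Fin.last K))⁻¹)
    (U : Fin (K + 1) → Matrix (Fin n) (Fin n) ℂ) :
    KGMDCond K n A U ↔ ∃ V, JETCond K n G U V := by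
  constructor
  · intro hGMD
    obtain ⟨V, hV, hR⟩ :=
      exists_unitary_mul_isUpperTriangular ((U (Fin.last K))ᴴ * G (Fin.last K))
    exact ⟨V, (jetCond_iff_kGMDCond_of_isUpperTriangular hinv hA
      (mem_unitaryGroup_iff'.mp hV) hR).mpr hGMD⟩
  · rintro ⟨V, hJET⟩
    have ⟨_, hV, hR⟩ := hJET
    exact (jetCond_iff_kGMDCond_of_isUpperTriangular hinv hA hV (hR (Fin.last K)).1).mp hJET

end Decompositions

/-- `K`-GMD of `A i = G i * (G (Fin.last K))⁻¹` is equivalent to `(K+1)`-JET of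
the `G i`; moreover, in passing from (a) to (b) the same unitaries `U i` can be
kept. -/
theorem kGMD_iff_jet (K n : ℕ) (hK : 1 ≤ K)
    (G : Fin (K + 1) → Matrix (Fin n) (Fin n) ℂ)
    (hdet : ∀ i j, (G i).det = (G j).det)
    (hinv : IsUnit (G (Fin.last K)))
    (A : Fin K → Matrix (Fin n) (Fin n) ℂ)
    (hA : ∀ i : Fin K, A i = G i.castSucc * (G (Fin.last K))⁻¹) :
    ((∃ U, KGMDCond K n A U) ↔ (∃ U V, JETCond K n G U V)) ∧
    (∀ U, KGMDCond K n A U → ∃ V, JETCond K n G U V) :=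
  have h := kGMD_iff_jet_general hinv hA
  ⟨exists_congr h, fun U => (h U).mp⟩
end

section
/- Let K ≥ 1, let 1 ≤ m ≤ n, and let G_1, …, G_{K+1} be n×n complex matrices with equal determinants such that G_{K+1} is invertible; define A_i = G_i G_{K+1}^{-1} for i = 1, …, K. Suppose there exist n×m matrices U_1, …, U_{K+1} with orthonormal columns such that for each i = 1, …, K the m×m matrix U_iᴴ A_i U_{K+1} is upper triangular with all diagonal entries equal to 1. Then there exists an n×m matrix V with orthonormal columns such that for every i = 1, …, K+1 the m×m matrix R_i := U_iᴴ G_i V is upper triangular and the diagonals of R_1, …, R_{K+1} all coincide, i.e. (R_i)_{jj} = (R_{K+1})_{jj} for all i and j. -/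
open Matrix

/-!
Write `W = (G i₀)⁻¹ * U i₀`. Then `(U i)ᴴ * G i * W` is unit upper triangular for every `i`:
for `i ≠ i₀` by assumption, and for `i = i₀` because it equals `(U i₀)ᴴ * U i₀ = 1`.
Orthonormalizing the columns of `W` multiplies it on the right by an upper triangular matrix `S`,
obtained here from the LDL decomposition of `Wᴴ * W`. With `V = W * S`, each
`(U i)ᴴ * G i * V` is then upper triangular with the diagonal of `S`.
-/

lemma diag_mul_of_isUpperTriangular {R n : Type*} [NonUnitalNonAssocSemiring R] [Fintype n]
    [LinearOrder n] {M N : Matrix n n R} (hM : M.IsUpperTriangular) (hN : N.IsUpperTriangular) :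
    (M * N).diag = M.diag * N.diag := by
  ext i
  refine Finset.sum_eq_single_of_mem i (Finset.mem_univ i) fun k _ hki => ?_
  rcases hki.lt_or_gt with hlt | hgt
  · exact mul_eq_zero_of_left (hM hlt) _
  · exact mul_eq_zero_of_right _ (hN hgt)

lemma mulVec_injective_of_mul_eq_one {R m n : Type*} [Semiring R] [Fintype m] [Fintype n]
    [DecidableEq m] {A : Matrix m n R} {B : Matrix n m R} (h : A * B = 1) :
    Function.Injective B.mulVec :=
  Function.LeftInverse.injective (g := A.mulVec) fun x => by
    rw [mulVec_mulVec, h, one_mulVec]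

section Orthonormalization

variable {𝕜 m n : Type*} [RCLike 𝕜] [Fintype m] [LinearOrder m] [Fintype n]

open scoped ComplexOrder

lemma exists_diagonal_conj_eq_one {ι : Type*} [Fintype ι] [DecidableEq ι] {d : ι → 𝕜}
    (hd : ∀ i, 0 < d i) :
    ∃ c : ι → 𝕜, (diagonal c)ᴴ * diagonal d * diagonal c = 1 := by
  have hroot (i : ι) : ∃ a : 𝕜, star a * d i * a = 1 := by
    obtain ⟨r, hr, hrd⟩ := RCLike.pos_iff_exists_ofReal.mp (hd i)
    refine ⟨((√r)⁻¹ : ℝ), ?_⟩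
    rw [← hrd, RCLike.star_def, RCLike.conj_ofReal]
    norm_cast
    rw [mul_right_comm, ← mul_inv, Real.mul_self_sqrt hr.le, inv_mul_cancel₀ hr.ne']
  choose c hc using hroot
  refine ⟨c, ?_⟩
  rw [diagonal_conjTranspose, diagonal_mul_diagonal, diagonal_mul_diagonal, ← diagonal_one]
  exact congrArg diagonal (funext hc)

lemma exists_isUpperTriangular_conj_eq_one {P : Matrix m m 𝕜} (hP : P.PosDef) :
    ∃ S : Matrix m m 𝕜, S.IsUpperTriangular ∧ Sᴴ * P * S = 1 := by
  let : LocallyFiniteOrderBot m := .ofIic m (fun a => {b | b ≤ a}) (by simp)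
  let L := LDL.lowerInv hP
  have hL : L.IsLowerTriangular := fun _ _ hij => LDL.lowerInv_triangular hP hij
  have hLDL : diagonal (LDL.diagEntries hP) = L * P * Lᴴ := LDL.diag_eq_lowerInv_conj hP
  have hpos : ∀ i, 0 < LDL.diagEntries hP i := by
    rw [← posDef_diagonal_iff, hLDL]
    exact hP.mul_mul_conjTranspose_same
      (vecMul_injective_of_isUnit (isUnit_of_invertible (LDL.lowerInv hP)))
  obtain ⟨c, hc⟩ := exists_diagonal_conj_eq_one hpos
  have hLH : Lᴴ.IsUpperTriangular := fun i j hij => by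
    rw [conjTranspose_apply, hL hij, star_zero]
  refine ⟨Lᴴ * diagonal c, hLH.mul (blockTriangular_diagonal c), ?_⟩
  rw [← hc, hLDL, conjTranspose_mul, conjTranspose_conjTranspose]
  simp only [Matrix.mul_assoc]

lemma exists_isUpperTriangular_orthonormal_mul {W : Matrix n m 𝕜}
    (hW : Function.Injective W.mulVec) :
    ∃ S : Matrix m m 𝕜, S.IsUpperTriangular ∧ (W * S)ᴴ * (W * S) = 1 := by
  obtain ⟨S, hS, hSW⟩ := exists_isUpperTriangular_conj_eq_one (PosDef.conjTranspose_mul_self W hW)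
  refine ⟨S, hS, ?_⟩
  rw [← hSW, conjTranspose_mul]
  simp only [Matrix.mul_assoc]

end Orthonormalization

theorem jet_of_kGMD_rect_general {𝕜 ι m n : Type*} [RCLike 𝕜] [Finite m] [LinearOrder m]
    [Fintype n] [DecidableEq n] (G : ι → Matrix n n 𝕜) (U : ι → Matrix n m 𝕜) (i₀ : ι)
    (hG : IsUnit (G i₀)) (hU : (U i₀)ᴴ * U i₀ = 1)
    (htri : ∀ i ≠ i₀, ((U i)ᴴ * (G i * (G i₀)⁻¹) * U i₀).IsUpperTriangular)
    (hdiag : ∀ i ≠ i₀, ((U i)ᴴ * (G i * (G i₀)⁻¹) * U i₀).diag = 1) :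
    ∃ V : Matrix n m 𝕜, Vᴴ * V = 1 ∧ (∀ i, ((U i)ᴴ * G i * V).IsUpperTriangular) ∧
      ∀ i, ((U i)ᴴ * G i * V).diag = ((U i₀)ᴴ * G i₀ * V).diag := by
  cases nonempty_fintype m
  let T (i : ι) : Matrix m m 𝕜 := (U i)ᴴ * (G i * (G i₀)⁻¹) * U i₀
  have hT₀ : T i₀ = 1 := by
    simp only [T, mul_nonsing_inv _ ((isUnit_iff_isUnit_det _).mp hG), Matrix.mul_one, hU]
  have hT (i : ι) : (T i).IsUpperTriangular ∧ (T i).diag = 1 := by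
    rcases eq_or_ne i i₀ with rfl | hi
    · exact hT₀ ▸ ⟨blockTriangular_one, diag_one⟩
    · exact ⟨htri i hi, hdiag i hi⟩
  have hassoc (i : ι) : (U i)ᴴ * G i * ((G i₀)⁻¹ * U i₀) = T i := by
    simp only [T, Matrix.mul_assoc]
  obtain ⟨S, hS, hV⟩ := exists_isUpperTriangular_orthonormal_mul
    (mulVec_injective_of_mul_eq_one ((hassoc i₀).trans hT₀))
  have hR (i : ι) : (U i)ᴴ * G i * ((G i₀)⁻¹ * U i₀ * S) = T i * S := by
    rw [← Matrix.mul_assoc, hassoc]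
  have hRdiag (i : ι) : ((U i)ᴴ * G i * ((G i₀)⁻¹ * U i₀ * S)).diag = S.diag := by
    rw [hR, diag_mul_of_isUpperTriangular (hT i).1 hS, (hT i).2, one_mul]
  exact ⟨(G i₀)⁻¹ * U i₀ * S, hV, fun i => hR i ▸ (hT i).1.mul hS,
    fun i => (hRdiag i).trans (hRdiag i₀).symm⟩

/-- Rectangular version of the passage from a `K`-GMD to a `(K+1)`-JET:
given `n × m` matrices `U i` with orthonormal columns such that each
`(U i)ᴴ * A i * U (Fin.last K)` is upper triangular with unit diagonal,
where `A i = G i * (G (Fin.last K))⁻¹`, there is an `n × m` matrix `V` with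
orthonormal columns such that each `R i := (U i)ᴴ * G i * V` is upper
triangular and all the `R i` have the same diagonal. -/
theorem jet_of_kGMD_rect (K n m : ℕ) (hK : 1 ≤ K) (hm : 1 ≤ m) (hmn : m ≤ n)
    (G : Fin (K + 1) → Matrix (Fin n) (Fin n) ℂ)
    (hdet : ∀ i j, (G i).det = (G j).det)
    (hinv : IsUnit (G (Fin.last K)))
    (A : Fin K → Matrix (Fin n) (Fin n) ℂ)
    (hA : ∀ i : Fin K, A i = G i.castSucc * (G (Fin.last K))⁻¹)
    (U : Fin (K + 1) → Matrix (Fin n) (Fin m) ℂ)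
    (hU : ∀ i, (U i)ᴴ * U i = 1)
    (htri : ∀ i : Fin K,
      ∀ k l : Fin m, l < k → ((U i.castSucc)ᴴ * A i * U (Fin.last K)) k l = 0)
    (hdiag : ∀ i : Fin K,
      ∀ k : Fin m, ((U i.castSucc)ᴴ * A i * U (Fin.last K)) k k = 1) :
    ∃ V : Matrix (Fin n) (Fin m) ℂ, Vᴴ * V = 1 ∧
      (∀ i : Fin (K + 1), ∀ k l : Fin m, l < k → ((U i)ᴴ * G i * V) k l = 0) ∧
      (∀ i : Fin (K + 1), ∀ j : Fin m,
        ((U i)ᴴ * G i * V) j j =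
          ((U (Fin.last K))ᴴ * G (Fin.last K) * V) j j) := by
  obtain ⟨V, hV, hVtri, hVdiag⟩ := jet_of_kGMD_rect_general G U (Fin.last K) hinv (hU _)
    (Fin.lastCases (absurd rfl) fun i _ => hA i ▸ htri i)
    (Fin.lastCases (absurd rfl) fun i _ => funext (hA i ▸ hdiag i))
  exact ⟨V, hV, hVtri, fun i => congrFun (hVdiag i)⟩
end

section
/- Let r_1 > r_2 > 0 be real numbers with r_1 r_2 = 1, let x_1, x_2 ∈ ℝ, and for i = 1, 2 let R_i be the real 2×2 upper-triangular matrix with rows (r_1, x_i) and (0, r_2). Then there exist complex 2×2 unitary matrices U_1, U_2, V such that for i = 1, 2 the matrix U_iᴴ R_i V is upper triangular with both diagonal entries equal to 1, if and only if r_2 ((x_1 + x_2)/2)² ≤ r_2 + x_1 x_2 / (r_1 − r_2). -/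
open Matrix

/-!
Only the first column `v` of `V` matters: `U` can be chosen to make `Uᴴ * A * V` unit upper
triangular exactly when `A v` is a unit vector, the second diagonal entry being taken care of by the
determinant. So one looks for a unit vector whose norm both matrices preserve. Up to scaling it is
`(z, 1)`, since `(1, 0)` is stretched by `r₁ > 1`. With `c = x / (r₁ - r₂)`, the matrix with rows
`(r₁, x)` and `(0, r₂)` preserves the norm of `(z, 1)` iff `z` lies on the circle
`|z + c|² = r₂² (1 + c²)`. Two such circles with distinct centres determine `z.re` and `|z|²`, and
`z` exists iff `z.re² ≤ |z|²`, which is the stated inequality; when the centres coincide, the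
inequality holds automatically.
-/

section Triangularization

variable {R m n : Type*} [CommRing R]

/-- Upper triangular with unit diagonal, the shape that the triangularizations below aim for.
`BlockTriangular id` is Mathlib's form of upper triangularity. -/
def IsUnitUpperTriangular [LT n] (T : Matrix n n R) : Prop :=
  T.BlockTriangular id ∧ ∀ k, T k k = 1

theorem isUnitUpperTriangular_fin_two_iff (T : Matrix (Fin 2) (Fin 2) R) :
    IsUnitUpperTriangular T ↔ T.col 0 = Pi.single 0 1 ∧ T.det = 1 := by
  simp only [IsUnitUpperTriangular, BlockTriangular, funext_iff, Fin.forall_fin_two, det_fin_two]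
  constructor
  · rintro ⟨⟨-, h₁₀, -⟩, h₀₀, h₁₁⟩
    simp_all
  · rintro ⟨⟨h₀₀, h₁₀⟩, hdet⟩
    simp_all

variable [StarRing R] [Fintype m] [Fintype n]

/-- Joint unit-diagonal triangularization (the `K`-GMD of a family of `K` matrices): the unitary
factor `V` on the right is common to the family, the one on the left may depend on the member. -/
def HasJointUnitTriangularization {ι : Type*} [DecidableEq n] [LT n]
    (A : ι → Matrix n n R) : Prop :=
  ∃ V ∈ unitaryGroup n R, ∀ i, ∃ U ∈ unitaryGroup n R, IsUnitUpperTriangular (Uᴴ * A i * V)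

/-- The matrix `A` preserves the squared norm `vᴴ v` of the vector `v`: for a unit vector, the
condition for `v` to be the first column of the right factor in a triangularization of `A`. -/
def PreservesNormAt (A : Matrix m n R) (v : n → R) : Prop :=
  star (A *ᵥ v) ⬝ᵥ (A *ᵥ v) = star v ⬝ᵥ v

theorem hasJointUnitTriangularization_fin_two_iff [DecidableEq n] [LT n]
    (A : Fin 2 → Matrix n n R) :
    HasJointUnitTriangularization A ↔
      ∃ U₁ U₂ V : Matrix n n R, U₁ᴴ * U₁ = 1 ∧ U₂ᴴ * U₂ = 1 ∧ Vᴴ * V = 1 ∧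
        (∀ k l, l < k → (U₁ᴴ * A 0 * V) k l = 0) ∧ (∀ k, (U₁ᴴ * A 0 * V) k k = 1) ∧
        (∀ k l, l < k → (U₂ᴴ * A 1 * V) k l = 0) ∧ (∀ k, (U₂ᴴ * A 1 * V) k k = 1) := by
  simp only [HasJointUnitTriangularization, IsUnitUpperTriangular, BlockTriangular, id,
    mem_unitaryGroup_iff', star_eq_conjTranspose, Fin.forall_fin_two]
  constructor
  · rintro ⟨V, hV, ⟨U₁, hU₁, hT₁, hd₁⟩, U₂, hU₂, hT₂, hd₂⟩
    exact ⟨U₁, U₂, V, hU₁, hU₂, hV, hT₁, hd₁, hT₂, hd₂⟩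
  · rintro ⟨U₁, U₂, V, hU₁, hU₂, hV, hT₁, hd₁, hT₂, hd₂⟩
    exact ⟨V, hV, ⟨U₁, hU₁, hT₁, hd₁⟩, U₂, hU₂, hT₂, hd₂⟩

theorem star_col_dotProduct_col_of_mem_unitaryGroup [DecidableEq n] {U : Matrix n n R}
    (hU : U ∈ unitaryGroup n R) (j : n) : star (U.col j) ⬝ᵥ U.col j = 1 := by
  simpa [Matrix.mul_apply, dotProduct] using congr_fun₂ (mem_unitaryGroup_iff'.mp hU) j j

theorem col_conjTranspose_mul_eq_single_iff [DecidableEq n] {U : Matrix n n R}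
    (hU : U ∈ unitaryGroup n R) (M : Matrix n n R) (j : n) :
    (Uᴴ * M).col j = Pi.single j 1 ↔ M.col j = U.col j := by
  have hU_star_mul : Uᴴ * U = 1 := mem_unitaryGroup_iff'.mp hU
  have hU_mul_star : U * Uᴴ = 1 := mem_unitaryGroup_iff.mp hU
  simp only [← mulVec_single_one, ← mulVec_mulVec]
  constructor <;> intro h
  · rw [← one_mulVec (M *ᵥ Pi.single j 1), ← hU_mul_star, ← mulVec_mulVec, h]
  · rw [h, mulVec_mulVec, hU_star_mul, one_mulVec]

theorem exists_mem_unitaryGroup_col_zero_eq_and_det_eq {v : Fin 2 → R}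
    (hv : star v ⬝ᵥ v = 1) {d : R} (hd : d ∈ unitary R) :
    ∃ U ∈ unitaryGroup (Fin 2) R, U.col 0 = v ∧ U.det = d := by
  have hd' : star d * d = 1 := Unitary.star_mul_self_of_mem hd
  have hv' : star (v 0) * v 0 + star (v 1) * v 1 = 1 := by
    simpa [dotProduct, Fin.sum_univ_two] using hv
  refine ⟨!![v 0, -(d * star (v 1)); v 1, d * star (v 0)], mem_unitaryGroup_iff'.mpr ?_, ?_, ?_⟩
  · ext i j
    fin_cases i <;> fin_cases j <;>
      simp only [Fin.isValue, Fin.zero_eta, Fin.mk_one, Matrix.mul_apply, star_apply, of_apply,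
        cons_val', cons_val_zero, cons_val_one, cons_val_fin_one, Fin.sum_univ_two, one_apply_eq,
        one_apply_ne, ne_eq, zero_ne_one, one_ne_zero, not_false_eq_true, star_neg, star_mul',
        star_star]
    · linear_combination hv'
    · ring
    · ring
    · linear_combination hd' + star d * d * hv'
  · ext i
    fin_cases i <;> rfl
  · rw [det_fin_two_of]
    linear_combination d * hv'

theorem exists_isUnitUpperTriangular_iff_preservesNormAt {A V : Matrix (Fin 2) (Fin 2) R}
    (hA : A.det ∈ unitary R) (hV : V ∈ unitaryGroup (Fin 2) R) :
    (∃ U ∈ unitaryGroup (Fin 2) R, IsUnitUpperTriangular (Uᴴ * A * V)) ↔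
      PreservesNormAt A (V.col 0) := by
  have hcol : (A * V).col 0 = A *ᵥ V.col 0 := by
    rw [← mulVec_single_one, ← mulVec_single_one, mulVec_mulVec]
  rw [PreservesNormAt, star_col_dotProduct_col_of_mem_unitaryGroup hV, ← hcol]
  simp only [isUnitUpperTriangular_fin_two_iff, Matrix.mul_assoc]
  constructor
  · rintro ⟨U, hU, hT, -⟩
    rw [(col_conjTranspose_mul_eq_single_iff hU _ _).mp hT]
    exact star_col_dotProduct_col_of_mem_unitaryGroup hU 0
  · intro h
    have hd : (A * V).det ∈ unitary R := by
      rw [det_mul]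
      exact mul_mem hA (det_of_mem_unitary hV)
    obtain ⟨U, hU, hU₀, hUdet⟩ := exists_mem_unitaryGroup_col_zero_eq_and_det_eq h hd
    refine ⟨U, hU, (col_conjTranspose_mul_eq_single_iff hU _ _).mpr hU₀.symm, ?_⟩
    rw [det_mul, det_conjTranspose, hUdet, Unitary.star_mul_self_of_mem hd]

theorem hasJointUnitTriangularization_iff_exists_unit {ι : Type*}
    {A : ι → Matrix (Fin 2) (Fin 2) R} (hA : ∀ i, (A i).det ∈ unitary R) :
    HasJointUnitTriangularization A ↔
      ∃ v, star v ⬝ᵥ v = 1 ∧ ∀ i, PreservesNormAt (A i) v := by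
  constructor
  · rintro ⟨V, hV, hU⟩
    exact ⟨V.col 0, star_col_dotProduct_col_of_mem_unitaryGroup hV 0,
      fun i ↦ (exists_isUnitUpperTriangular_iff_preservesNormAt (hA i) hV).mp (hU i)⟩
  · rintro ⟨v, hv, hAv⟩
    obtain ⟨V, hV, rfl, -⟩ := exists_mem_unitaryGroup_col_zero_eq_and_det_eq hv (one_mem _)
    exact ⟨V, hV, fun i ↦
      (exists_isUnitUpperTriangular_iff_preservesNormAt (hA i) hV).mpr (hAv i)⟩

end Triangularization

section Scaling

theorem preservesNormAt_smul_iff {K m n : Type*} [Field K] [StarRing K] [Fintype m] [Fintype n]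
    {A : Matrix m n K} {v : n → K} {c : K} (hc : c ≠ 0) :
    PreservesNormAt A (c • v) ↔ PreservesNormAt A v := by
  simp [PreservesNormAt, mulVec_smul, hc]

variable {𝕜 m n ι : Type*} [RCLike 𝕜] [Fintype m] [Fintype n]

theorem exists_smul_star_dotProduct_self_eq_one {v : n → 𝕜} (hv : v ≠ 0) :
    ∃ c : 𝕜, c ≠ 0 ∧ star (c • v) ⬝ᵥ (c • v) = 1 := by
  set w : EuclideanSpace 𝕜 n := WithLp.toLp 2 v with hw_def
  have hw : (‖w‖ : 𝕜) ≠ 0 := by simpa [hw_def] using hv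
  have hdot : star v ⬝ᵥ v = (‖w‖ : 𝕜) ^ 2 := by
    rw [← inner_self_eq_norm_sq_to_K, EuclideanSpace.inner_toLp_toLp, dotProduct_comm]
  refine ⟨(‖w‖ : 𝕜)⁻¹, inv_ne_zero hw, ?_⟩
  rw [star_smul, smul_dotProduct, dotProduct_smul, hdot, star_inv₀, RCLike.star_def,
    RCLike.conj_ofReal, smul_eq_mul, smul_eq_mul]
  field_simp

theorem exists_unit_preservesNormAt_iff {A : ι → Matrix m (Fin 2) 𝕜}
    (h : ∃ i, ¬ PreservesNormAt (A i) ![1, 0]) :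
    (∃ v, star v ⬝ᵥ v = 1 ∧ ∀ i, PreservesNormAt (A i) v) ↔
      ∃ z, ∀ i, PreservesNormAt (A i) ![z, 1] := by
  constructor
  · rintro ⟨v, hv, hAv⟩
    obtain ⟨i₀, hi₀⟩ := h
    have hv₁ : v 1 ≠ 0 := by
      intro hv₁
      have hv₀ : v 0 ≠ 0 := by
        intro hv₀
        simp [dotProduct, Fin.sum_univ_two, hv₀, hv₁] at hv
      have hsmul : v = v 0 • ![1, 0] := by
        ext i
        fin_cases i <;> simp [hv₁]
      exact hi₀ ((preservesNormAt_smul_iff hv₀).mp (hsmul ▸ hAv i₀))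
    have hsmul : v = v 1 • ![v 0 / v 1, 1] := by
      ext i
      fin_cases i <;> simp [mul_div_cancel₀, hv₁]
    exact ⟨v 0 / v 1, fun i ↦ (preservesNormAt_smul_iff hv₁).mp (hsmul ▸ hAv i)⟩
  · rintro ⟨z, hz⟩
    have hne : ![z, 1] ≠ 0 := fun h₀ ↦ one_ne_zero (congr_fun h₀ 1)
    obtain ⟨c, hc, hunit⟩ := exists_smul_star_dotProduct_self_eq_one hne
    exact ⟨c • ![z, 1], hunit, fun i ↦ (preservesNormAt_smul_iff hc).mpr (hz i)⟩

end Scaling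

section Circles

theorem exists_re_eq_and_normSq_eq_iff (p q : ℝ) :
    (∃ z : ℂ, z.re = p ∧ Complex.normSq z = q) ↔ p ^ 2 ≤ q := by
  constructor
  · rintro ⟨z, rfl, rfl⟩
    exact (sq _).trans_le (Complex.re_sq_le_normSq z)
  · intro h
    refine ⟨⟨p, √(q - p ^ 2)⟩, rfl, ?_⟩
    rw [Complex.normSq_mk, Real.mul_self_sqrt (sub_nonneg.mpr h)]
    ring

theorem normSq_add_ofReal (z : ℂ) (c : ℝ) :
    Complex.normSq (z + c) = Complex.normSq z + 2 * c * z.re + c ^ 2 := by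
  rw [Complex.normSq_add, Complex.normSq_ofReal, Complex.conj_ofReal, Complex.re_mul_ofReal]
  ring

theorem exists_normSq_add_ofReal_eq_iff {k : ℝ} (hk₀ : 0 ≤ k) (hk₁ : k ≤ 1) (c₁ c₂ : ℝ) :
    (∃ z : ℂ, Complex.normSq (z + c₁) = k * (1 + c₁ ^ 2) ∧
        Complex.normSq (z + c₂) = k * (1 + c₂ ^ 2)) ↔
      ((1 - k) * ((c₁ + c₂) / 2)) ^ 2 ≤ k + (1 - k) * (c₁ * c₂) := by
  simp only [normSq_add_ofReal]
  constructor
  · rintro ⟨z, h₁, h₂⟩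
    rcases eq_or_ne c₁ c₂ with rfl | hc
    · have : 0 ≤ k * (1 + (1 - k) * c₁ ^ 2) :=
        mul_nonneg hk₀ (add_nonneg zero_le_one (mul_nonneg (sub_nonneg.mpr hk₁) (sq_nonneg c₁)))
      linear_combination this
    · have hre : z.re = -((1 - k) * ((c₁ + c₂) / 2)) :=
        mul_left_cancel₀ (sub_ne_zero.mpr hc) (by linear_combination (h₁ - h₂) / 2)
      have hnormSq : Complex.normSq z = k + (1 - k) * (c₁ * c₂) := by
        linear_combination h₁ - 2 * c₁ * hre
      rw [← neg_sq]
      exact (exists_re_eq_and_normSq_eq_iff _ _).mp ⟨z, hre, hnormSq⟩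
  · intro h
    rw [← neg_sq] at h
    obtain ⟨z, hre, hnormSq⟩ := (exists_re_eq_and_normSq_eq_iff _ _).mpr h
    exact ⟨z, by rw [hre, hnormSq]; ring, by rw [hre, hnormSq]; ring⟩

end Circles

section EquiDiagonal

variable {r₁ r₂ : ℝ}

theorem preservesNormAt_one_zero_iff (r₁ r₂ x : ℝ) :
    PreservesNormAt !![(r₁ : ℂ), (x : ℂ); 0, (r₂ : ℂ)] ![1, 0] ↔ r₁ ^ 2 = 1 := by
  rw [← Complex.ofReal_inj]
  simp [PreservesNormAt, dotProduct, Fin.sum_univ_two, sq]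

theorem preservesNormAt_iff_normSq_add (hr : r₁ ≠ r₂) (hdet : r₁ * r₂ = 1) (x : ℝ) (z : ℂ) :
    PreservesNormAt !![(r₁ : ℂ), (x : ℂ); 0, (r₂ : ℂ)] ![z, 1] ↔
      Complex.normSq (z + ↑(x / (r₁ - r₂))) = r₂ ^ 2 * (1 + (x / (r₁ - r₂)) ^ 2) := by
  have hsub : r₁ - r₂ ≠ 0 := sub_ne_zero.mpr hr
  have hr₁ : r₁ ≠ 0 := left_ne_zero_of_mul_eq_one hdet
  have hnorm : PreservesNormAt !![(r₁ : ℂ), (x : ℂ); 0, (r₂ : ℂ)] ![z, 1] ↔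
      Complex.normSq (r₁ * z + x) + r₂ ^ 2 = Complex.normSq z + 1 := by
    rw [← Complex.ofReal_inj]
    simp [PreservesNormAt, dotProduct, Fin.sum_univ_two, Complex.normSq_eq_conj_mul_self, sq,
      mul_comm (r₁ : ℂ)]
  -- The factor `r₁ * (r₁ - r₂)` is `r₁ ^ 2 - 1`, the coefficient of `|z|²` on the left.
  have hfactor : Complex.normSq (r₁ * z + x) + r₂ ^ 2 - (Complex.normSq z + 1) =
      r₁ * (r₁ - r₂) * (Complex.normSq (z + ↑(x / (r₁ - r₂))) -
        r₂ ^ 2 * (1 + (x / (r₁ - r₂)) ^ 2)) := by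
    obtain ⟨c, rfl⟩ : ∃ c, x = c * (r₁ - r₂) := ⟨x / (r₁ - r₂), by field_simp⟩
    rw [mul_div_cancel_right₀ c hsub, normSq_add_ofReal, normSq_add_ofReal, Complex.normSq_mul,
      Complex.normSq_ofReal, Complex.re_ofReal_mul]
    linear_combination (Complex.normSq z + r₁ * r₂ + 1 - r₂ ^ 2 + c ^ 2 * r₂ * (r₁ - r₂)) * hdet
  rw [hnorm, ← sub_eq_zero, hfactor, ← sub_eq_zero (a := Complex.normSq _)]
  exact mul_eq_zero_iff_left (mul_ne_zero hr₁ hsub)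

theorem hasJointUnitTriangularization_iff_exists_forall_normSq_add {ι : Type*} [Nonempty ι]
    (hr : r₁ ≠ r₂) (hdet : r₁ * r₂ = 1) (x : ι → ℝ) :
    HasJointUnitTriangularization (fun i ↦ !![(r₁ : ℂ), (x i : ℂ); 0, (r₂ : ℂ)]) ↔
      ∃ z : ℂ, ∀ i, Complex.normSq (z + ↑(x i / (r₁ - r₂))) =
        r₂ ^ 2 * (1 + (x i / (r₁ - r₂)) ^ 2) := by
  have hunitary (i : ι) : (!![(r₁ : ℂ), (x i : ℂ); 0, (r₂ : ℂ)]).det ∈ unitary ℂ := by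
    have hdet' : (r₁ : ℂ) * r₂ = 1 := mod_cast hdet
    simp [det_fin_two_of, hdet']
  have hr₁ : r₁ ^ 2 ≠ 1 := fun h ↦
    hr (mul_left_cancel₀ (left_ne_zero_of_mul_eq_one hdet) (by rw [← sq, h, hdet]))
  have hstretch : ∃ i, ¬ PreservesNormAt !![(r₁ : ℂ), (x i : ℂ); 0, (r₂ : ℂ)] ![1, 0] :=
    ⟨Classical.arbitrary ι, (preservesNormAt_one_zero_iff r₁ r₂ _).not.mpr hr₁⟩
  rw [hasJointUnitTriangularization_iff_exists_unit hunitary,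
    exists_unit_preservesNormAt_iff hstretch]
  simp only [preservesNormAt_iff_normSq_add hr hdet]

theorem exists_normSq_add_div_eq_iff (hr : r₂ < r₁) (hr₂ : 0 < r₂) (hdet : r₁ * r₂ = 1)
    (x₁ x₂ : ℝ) :
    (∃ z : ℂ,
        Complex.normSq (z + ↑(x₁ / (r₁ - r₂))) = r₂ ^ 2 * (1 + (x₁ / (r₁ - r₂)) ^ 2) ∧
        Complex.normSq (z + ↑(x₂ / (r₁ - r₂))) = r₂ ^ 2 * (1 + (x₂ / (r₁ - r₂)) ^ 2)) ↔
      r₂ * ((x₁ + x₂) / 2) ^ 2 ≤ r₂ + x₁ * x₂ / (r₁ - r₂) := by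
  have hsub : 0 < r₁ - r₂ := sub_pos.mpr hr
  have hdiff : 1 - r₂ ^ 2 = r₂ * (r₁ - r₂) := by linear_combination -hdet
  have hr₂_sq : r₂ ^ 2 ≤ 1 := sub_nonneg.mp (hdiff ▸ (mul_pos hr₂ hsub).le)
  have hre : (r₂ * (r₁ - r₂) * ((x₁ / (r₁ - r₂) + x₂ / (r₁ - r₂)) / 2)) ^ 2 =
      r₂ * (r₂ * ((x₁ + x₂) / 2) ^ 2) := by
    field_simp
  have hnormSq : r₂ ^ 2 + r₂ * (r₁ - r₂) * (x₁ / (r₁ - r₂) * (x₂ / (r₁ - r₂))) =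
      r₂ * (r₂ + x₁ * x₂ / (r₁ - r₂)) := by
    field_simp
  rw [exists_normSq_add_ofReal_eq_iff (sq_nonneg r₂) hr₂_sq, hdiff, hre, hnormSq,
    mul_le_mul_iff_right₀ hr₂]

end EquiDiagonal

/-- Necessary and sufficient condition for the existence of a simultaneous
unit-diagonal triangularization (2-GMD) of the pair of real `2 × 2` matrices
`R i = !![r₁, x i; 0, r₂]` (viewed as complex matrices) with `r₁ > r₂ > 0` and
`r₁ * r₂ = 1`, in terms of the JET parameters `r₁, r₂, x₁, x₂`. -/
theorem twoGMD_two_by_two_iff (r₁ r₂ x₁ x₂ : ℝ)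
    (hr : r₂ < r₁) (hr₂ : 0 < r₂) (hdet : r₁ * r₂ = 1) :
    (∃ U₁ U₂ V : Matrix (Fin 2) (Fin 2) ℂ,
      U₁ᴴ * U₁ = 1 ∧ U₂ᴴ * U₂ = 1 ∧ Vᴴ * V = 1 ∧
      (∀ k l : Fin 2, l < k →
        (U₁ᴴ * !![(r₁ : ℂ), (x₁ : ℂ); 0, (r₂ : ℂ)] * V) k l = 0) ∧
      (∀ k : Fin 2, (U₁ᴴ * !![(r₁ : ℂ), (x₁ : ℂ); 0, (r₂ : ℂ)] * V) k k = 1) ∧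
      (∀ k l : Fin 2, l < k →
        (U₂ᴴ * !![(r₁ : ℂ), (x₂ : ℂ); 0, (r₂ : ℂ)] * V) k l = 0) ∧
      (∀ k : Fin 2, (U₂ᴴ * !![(r₁ : ℂ), (x₂ : ℂ); 0, (r₂ : ℂ)] * V) k k = 1)) ↔
    r₂ * ((x₁ + x₂) / 2) ^ 2 ≤ r₂ + x₁ * x₂ / (r₁ - r₂) := by
  refine (hasJointUnitTriangularization_fin_two_iff
    fun i ↦ !![(r₁ : ℂ), (![x₁, x₂] i : ℂ); 0, (r₂ : ℂ)]).symm.trans ?_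
  rw [hasJointUnitTriangularization_iff_exists_forall_normSq_add hr.ne' hdet]
  simp only [Fin.forall_fin_two, cons_val_zero, cons_val_one]
  exact exists_normSq_add_div_eq_iff hr hr₂ hdet x₁ x₂
end

section
/- Let A_1 and A_2 be 2×2 complex matrices, each with determinant 1. Then for every integer N ≥ 2 there exist three 2N × (2N−2) matrices U_1, U_2, V with orthonormal columns such that, for i = 1, 2, the (2N−2)×(2N−2) matrix U_iᴴ (I_N ⊗ A_i) V is upper triangular with all diagonal entries equal to 1. -/
open Matrix Kronecker

/-!
A matrix `B` with `|det B| = 1` preserves the length of some nonzero vector, since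
`det (BᴴB - 1) = 2 - ‖B‖_F² ≤ 0` makes the Hermitian form `BᴴB - 1` isotropic. Applied to
`B = A₁A₂⁻¹` this gives a unit vector that `A₁` and `A₂` stretch by the same factor `r`; taking it
as first column of a unitary `P` yields `Qᵢᴴ Aᵢ P = [r, xᵢ; 0, r⁻¹]` with a diagonal common to
both `i`. Applied to `B = diag(r, r⁻¹)` it gives unitary `X`, `Y` with
`Xᴴ diag(r, r⁻¹) Y = [1, t; 0, 1]`.

In `I_N ⊗ [r, xᵢ; 0, r⁻¹]` one drops the first vector of the first copy and the second vector of the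
last copy, and regroups the others by pairing the first vector of copy `j + 1` with the second
vector of copy `j`. The diagonal blocks become `diag(r, r⁻¹)` and the entries `xᵢ` move to the block
superdiagonal, so multiplying every block by `Xᴴ` and `Y` leaves an upper unitriangular matrix.
-/

section

variable {𝕜 n : Type*} [RCLike 𝕜]

theorem exists_mem_unitaryGroup_col_eq [Fintype n] [DecidableEq n] (j : n)
    {v : EuclideanSpace 𝕜 n} (hv : ‖v‖ = 1) :
    ∃ P ∈ unitaryGroup n 𝕜, P.col j = v := by
  obtain ⟨b, hb⟩ := Orthonormal.exists_orthonormalBasis_extension_of_card_eq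
    (v := fun _ ↦ v) (s := {j}) finrank_euclideanSpace
    ⟨fun _ ↦ hv, fun i i' h ↦ (h (Subsingleton.elim i i')).elim⟩
  refine ⟨_, (EuclideanSpace.basisFun n 𝕜).toMatrix_orthonormalBasis_mem_unitary b, ?_⟩
  ext i
  simp [Module.Basis.toMatrix_apply, hb j rfl]

theorem norm_det_of_mem_unitaryGroup [Fintype n] [DecidableEq n] {Q : Matrix n n 𝕜}
    (hQ : Q ∈ unitaryGroup n 𝕜) : ‖Q.det‖ = 1 :=
  CStarRing.norm_of_mem_unitary (det_of_mem_unitary hQ)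

theorem col_conjTranspose_mul_eq_single [Fintype n] [DecidableEq n] {Q B : Matrix n n 𝕜}
    (hQ : Q ∈ unitaryGroup n 𝕜) {j : n} {r : 𝕜} (hB : B.col j = r • Q.col j) :
    (Qᴴ * B).col j = Pi.single j r := by
  have hQQ : Qᴴ * Q = 1 := mem_unitaryGroup_iff'.1 hQ
  calc (Qᴴ * B).col j = Qᴴ *ᵥ B.col j := rfl
    _ = r • (Qᴴ * Q).col j := by rw [hB, mulVec_smul]; rfl
    _ = Pi.single j r := by rw [hQQ]; ext i; simp [one_apply, Pi.single_apply]

theorem exists_conjTranspose_mul_eq_upperTriangular {B : Matrix (Fin 2) (Fin 2) 𝕜}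
    (hB : WithLp.toLp 2 (B.col 0) ≠ 0) :
    ∃ Q ∈ unitaryGroup (Fin 2) 𝕜, ∃ x, Qᴴ * B =
      !![(‖WithLp.toLp 2 (B.col 0)‖ : 𝕜), x; 0, (‖B.det‖ / ‖WithLp.toLp 2 (B.col 0)‖ : ℝ)] := by
  set r := ‖WithLp.toLp 2 (B.col 0)‖ with hr
  have hr_pos : 0 < r := norm_pos_iff.2 hB
  have hr_ne : (r : 𝕜) ≠ 0 := mod_cast hr_pos.ne'
  obtain ⟨Q, hQ, hQB⟩ := exists_mem_unitaryGroup_col_eq (0 : Fin 2) (norm_smul_inv_norm (𝕜 := 𝕜) hB)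
  have hBQ : B.col 0 = (r : 𝕜) • Q.col 0 := by simp [hQB, ← hr, smul_smul, hr_ne]
  have hcol := col_conjTranspose_mul_eq_single hQ hBQ
  have h₀ : (Qᴴ * B) 0 0 = r := congr($hcol 0)
  have h₁ : (Qᴴ * B) 1 0 = 0 := congr($hcol 1)
  have hdet : ‖(Qᴴ * B) 1 1‖ = ‖B.det‖ / r := by
    have hdet_eq : ‖(Qᴴ * B).det‖ = ‖B.det‖ := by
      rw [det_mul, norm_mul, det_conjTranspose, norm_star, norm_det_of_mem_unitaryGroup hQ,
        one_mul]
    rw [← hdet_eq, det_fin_two, h₀, h₁, mul_zero, sub_zero, norm_mul, RCLike.norm_ofReal,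
      abs_of_pos hr_pos, mul_div_cancel_left₀ _ hr_pos.ne']
  -- The phase `c` makes the second diagonal entry nonnegative.
  obtain ⟨c, hc, hcd⟩ := RCLike.exists_norm_eq_mul_self ((Qᴴ * B) 1 1)
  refine ⟨Q * diagonal ![1, star c], mul_mem hQ (mem_unitaryGroup_iff.2 ?_), (Qᴴ * B) 0 1, ?_⟩
  · ext i j
    fin_cases i <;> fin_cases j <;>
      simp [star_eq_conjTranspose, diagonal_conjTranspose, RCLike.conj_mul, hc]
  · rw [conjTranspose_mul, Matrix.mul_assoc, diagonal_conjTranspose, eta_fin_two (Qᴴ * B), h₀, h₁,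
      ← hdet, hcd]
    ext i j
    fin_cases i <;> fin_cases j <;> simp

theorem exists_inner_toEuclideanLin_self_eq_zero {H : Matrix (Fin 2) (Fin 2) 𝕜}
    (hH : H.IsHermitian) (hdet : RCLike.re H.det ≤ 0) :
    ∃ w ≠ 0, inner 𝕜 w (toEuclideanLin H w) = 0 := by
  have hinner (a b : 𝕜) : inner 𝕜 !₂[a, b] (toEuclideanLin H !₂[a, b]) =
      (H 0 0 * a + H 0 1 * b) * star a + (H 1 0 * a + H 1 1 * b) * star b := by
    simp [PiLp.inner_apply]
  by_cases h : H 0 0 = 0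
  · exact ⟨!₂[1, 0], fun hw ↦ by simpa using congr($hw 0), by rw [hinner]; simp [h]⟩
  -- With second coordinate `H 0 0`, the equation for the first coordinate `a` is
  -- `‖a + H 0 1‖ ^ 2 = -det H`.
  set s := √(-RCLike.re H.det)
  have hs : (s : 𝕜) ^ 2 = -H.det := by
    have hreal : star H.det = H.det := by rw [← det_conjTranspose, hH.eq]
    rw [← RCLike.conj_eq_iff_re.1 hreal]
    exact_mod_cast Real.sq_sqrt (neg_nonneg.2 hdet)
  refine ⟨!₂[s - H 0 1, H 0 0], fun hw ↦ h (by simpa using congr($hw 1)), ?_⟩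
  have hstar : star (s : 𝕜) = s := RCLike.conj_ofReal s
  rw [hinner, star_sub, hstar, hH.apply 0 0, hH.apply 1 0]
  rw [det_fin_two] at hs
  linear_combination H 0 0 * hs

theorem two_mul_norm_det_le_sum_norm_sq (B : Matrix (Fin 2) (Fin 2) 𝕜) :
    2 * ‖B.det‖ ≤ ∑ i, ∑ j, ‖B i j‖ ^ 2 := by
  have h : ‖B.det‖ ≤ ‖B 0 0‖ * ‖B 1 1‖ + ‖B 0 1‖ * ‖B 1 0‖ := by
    rw [det_fin_two, ← norm_mul, ← norm_mul]
    exact norm_sub_le _ _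
  simp only [Fin.sum_univ_two]
  linarith [two_mul_le_add_sq ‖B 0 0‖ ‖B 1 1‖, two_mul_le_add_sq ‖B 0 1‖ ‖B 1 0‖]

theorem det_sub_one_fin_two {R : Type*} [CommRing R] (M : Matrix (Fin 2) (Fin 2) R) :
    (M - 1).det = M.det - M.trace + 1 := by
  simp only [det_fin_two, trace_fin_two, Matrix.sub_apply, one_apply_eq, ne_eq, zero_ne_one,
    one_ne_zero, not_false_eq_true, one_apply_ne, sub_zero]
  ring

theorem re_det_conjTranspose_mul_self_sub_one_nonpos {B : Matrix (Fin 2) (Fin 2) 𝕜}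
    (hB : ‖B.det‖ = 1) :
    RCLike.re (Bᴴ * B - 1).det ≤ 0 := by
  have htrace : (Bᴴ * B).trace = ((∑ i, ∑ j, ‖B i j‖ ^ 2 : ℝ) : 𝕜) := by
    simp only [trace_fin_two, mul_apply, conjTranspose_apply, RCLike.star_def, RCLike.conj_mul,
      Fin.sum_univ_two, map_add, map_pow]
    ring
  rw [det_sub_one_fin_two, htrace, det_mul, det_conjTranspose, RCLike.star_def,
    RCLike.conj_mul, hB]
  simp only [map_add, map_sub, RCLike.ofReal_re, map_one, one_pow, RCLike.one_re]
  linarith [two_mul_norm_det_le_sum_norm_sq B]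

theorem exists_norm_toEuclideanLin_eq_norm {B : Matrix (Fin 2) (Fin 2) 𝕜} (hB : ‖B.det‖ = 1) :
    ∃ w ≠ 0, ‖toEuclideanLin B w‖ = ‖w‖ := by
  obtain ⟨w, hw, h⟩ := exists_inner_toEuclideanLin_self_eq_zero
    ((isHermitian_conjTranspose_mul_self B).sub isHermitian_one)
    (re_det_conjTranspose_mul_self_sub_one_nonpos hB)
  refine ⟨w, hw, ?_⟩
  rw [map_sub, toLpLin_mul_same, toLpLin_one, toEuclideanLin_conjTranspose_eq_adjoint,
    LinearMap.sub_apply, inner_sub_right, LinearMap.comp_apply, LinearMap.adjoint_inner_right,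
    LinearMap.id_apply, inner_self_eq_norm_sq_to_K, inner_self_eq_norm_sq_to_K, sub_eq_zero] at h
  exact (sq_eq_sq₀ (norm_nonneg _) (norm_nonneg _)).1 (mod_cast h)

theorem exists_norm_toEuclideanLin_eq {A₁ A₂ : Matrix (Fin 2) (Fin 2) 𝕜}
    (h₂ : A₂.det ≠ 0) (h : ‖A₁.det‖ = ‖A₂.det‖) :
    ∃ v, ‖v‖ = 1 ∧ ‖toEuclideanLin A₁ v‖ = ‖toEuclideanLin A₂ v‖ := by
  obtain ⟨w, hw, hBw⟩ := exists_norm_toEuclideanLin_eq_norm (B := A₁ * A₂⁻¹) (by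
    rw [det_mul, det_nonsing_inv, Ring.inverse_eq_inv', norm_mul, norm_inv, h,
      mul_inv_cancel₀ (norm_ne_zero_iff.2 h₂)])
  set u := toEuclideanLin A₂⁻¹ w
  have hA₂u : toEuclideanLin A₂ u = w := by
    rw [← LinearMap.comp_apply, ← toLpLin_mul_same, mul_nonsing_inv _ h₂.isUnit, toLpLin_one,
      LinearMap.id_apply]
  have hu : u ≠ 0 := by
    rintro hu
    exact hw (by rw [← hA₂u, hu, map_zero])
  rw [toLpLin_mul_same, LinearMap.comp_apply] at hBw
  refine ⟨(‖u‖ : 𝕜)⁻¹ • u, norm_smul_inv_norm hu, ?_⟩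
  rw [map_smul, map_smul, norm_smul, norm_smul, hBw, hA₂u]

theorem exists_conjTranspose_mul_mul_eq_upperTriangular {A P : Matrix (Fin 2) (Fin 2) 𝕜}
    {v : EuclideanSpace 𝕜 (Fin 2)} (hP : P ∈ unitaryGroup (Fin 2) 𝕜) (hPv : P.col 0 = v)
    (hAv : toEuclideanLin A v ≠ 0) :
    ∃ Q ∈ unitaryGroup (Fin 2) 𝕜, ∃ x, Qᴴ * A * P =
      !![(‖toEuclideanLin A v‖ : 𝕜), x; 0, (‖A.det‖ / ‖toEuclideanLin A v‖ : ℝ)] := by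
  have hcol : WithLp.toLp 2 ((A * P).col 0) = toEuclideanLin A v := by
    rw [toLpLin_apply, ← hPv]
    rfl
  have hdet : ‖(A * P).det‖ = ‖A.det‖ := by
    rw [det_mul, norm_mul, norm_det_of_mem_unitaryGroup hP, mul_one]
  have h := exists_conjTranspose_mul_eq_upperTriangular (B := A * P) (hcol ▸ hAv)
  simpa only [hcol, hdet, ← Matrix.mul_assoc] using h

theorem exists_common_triangularization {A₁ A₂ : Matrix (Fin 2) (Fin 2) 𝕜}
    (h₂ : A₂.det ≠ 0) (h : ‖A₁.det‖ = ‖A₂.det‖) :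
    ∃ Q₁ ∈ unitaryGroup (Fin 2) 𝕜, ∃ Q₂ ∈ unitaryGroup (Fin 2) 𝕜, ∃ P ∈ unitaryGroup (Fin 2) 𝕜,
      ∃ (r s : ℝ) (x₁ x₂ : 𝕜), r * s = ‖A₂.det‖ ∧
        Q₁ᴴ * A₁ * P = !![(r : 𝕜), x₁; 0, (s : 𝕜)] ∧
        Q₂ᴴ * A₂ * P = !![(r : 𝕜), x₂; 0, (s : 𝕜)] := by
  obtain ⟨v, hv, hv₁₂⟩ := exists_norm_toEuclideanLin_eq h₂ h
  have hA₂v : toEuclideanLin A₂ v ≠ 0 := fun h₀ ↦ by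
    have hv₀ : v.ofLp = 0 := eq_zero_of_mulVec_eq_zero h₂ congr(($h₀).ofLp)
    simp [(WithLp.ofLp_eq_zero 2).1 hv₀] at hv
  have hA₁v : toEuclideanLin A₁ v ≠ 0 := norm_ne_zero_iff.1 (hv₁₂ ▸ norm_ne_zero_iff.2 hA₂v)
  obtain ⟨P, hP, hPv⟩ := exists_mem_unitaryGroup_col_eq 0 hv
  obtain ⟨Q₁, hQ₁, x₁, hx₁⟩ := exists_conjTranspose_mul_mul_eq_upperTriangular hP hPv hA₁v
  obtain ⟨Q₂, hQ₂, x₂, hx₂⟩ := exists_conjTranspose_mul_mul_eq_upperTriangular hP hPv hA₂v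
  rw [h, hv₁₂] at hx₁
  exact ⟨Q₁, hQ₁, Q₂, hQ₂, P, hP, _, _, x₁, x₂,
    mul_div_cancel₀ _ (norm_ne_zero_iff.2 hA₂v), hx₁, hx₂⟩

theorem exists_geometric_mean_decomposition {A : Matrix (Fin 2) (Fin 2) 𝕜} (hA : ‖A.det‖ = 1) :
    ∃ X ∈ unitaryGroup (Fin 2) 𝕜, ∃ Y ∈ unitaryGroup (Fin 2) 𝕜,
      ∃ t, Xᴴ * A * Y = !![1, t; 0, 1] := by
  obtain ⟨y, hy, hAy⟩ := exists_norm_toEuclideanLin_eq (A₁ := A) (A₂ := 1) (by simp) (by simp [hA])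
  rw [toLpLin_one, LinearMap.id_apply, hy] at hAy
  obtain ⟨Y, hY, hYy⟩ := exists_mem_unitaryGroup_col_eq 0 hy
  obtain ⟨X, hX, t, hXY⟩ := exists_conjTranspose_mul_mul_eq_upperTriangular hY hYy
    (norm_ne_zero_iff.1 (hAy ▸ one_ne_zero))
  exact ⟨X, hX, Y, hY, t, by simpa [hAy, hA] using hXY⟩

end

/-- `T` is upper unitriangular with respect to the order on its index type pulled back along `b`:
`b = id` for the index type's own order, `b = toLex` for the lexicographic order on pairs, whose
default order is the product order. -/
structure IsUnitriangular {m R α : Type*} [LT α] [Zero R] [One R] (T : Matrix m m R) (b : m → α) :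
    Prop where
  blockTriangular : T.BlockTriangular b
  diag_eq_one (i : m) : T i i = 1

theorem IsUnitriangular.submatrix {m n R α : Type*} [Preorder α] [Preorder n] [Zero R] [One R]
    {T : Matrix m m R} {b : m → α} (hT : IsUnitriangular T b) {f : n → m}
    (hf : StrictMono (b ∘ f)) : IsUnitriangular (T.submatrix f f) id :=
  ⟨fun _ _ h ↦ hT.blockTriangular (hf h), fun i ↦ hT.diag_eq_one (f i)⟩

theorem isUnitriangular_one_kronecker_add_kronecker {m n R : Type*} [Preorder m] [DecidableEq m]
    [Preorder n] [NonAssocSemiring R] {T : Matrix n n R} (hT : IsUnitriangular T id)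
    {S : Matrix m m R} (hS : ∀ ⦃i j⦄, j ≤ i → S i j = 0) (E : Matrix n n R) :
    IsUnitriangular ((1 : Matrix m m R) ⊗ₖ T + S ⊗ₖ E) toLex where
  blockTriangular := by
    rintro ⟨i, a⟩ ⟨j, b⟩ h
    obtain hji | ⟨rfl, hba⟩ := Prod.Lex.toLex_lt_toLex.1 h
    · simp [hS hji.le, one_apply_ne hji.ne']
    · simp [hS le_rfl, hT.blockTriangular hba]
  diag_eq_one := by simp [hS le_rfl, hT.diag_eq_one]

section

variable {R : Type*}

/-- The staggered pairing of the basis vectors of `M + 1` copies of a plane: its `j`-th pair is the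
first vector of copy `j + 1` and the second vector of copy `j`, so the first vector of the first
copy and the second vector of the last copy are left out. -/
def stagger (M : ℕ) (p : Fin M × Fin 2) : Fin (M + 1) × Fin 2 :=
  ![(p.1.succ, 0), (p.1.castSucc, 1)] p.2

theorem stagger_injective (M : ℕ) : Function.Injective (stagger M) := by
  rintro ⟨i, a⟩ ⟨j, b⟩ h
  fin_cases a <;> fin_cases b <;> simp_all [stagger]

theorem one_kronecker_submatrix_stagger {M : ℕ} [NonAssocSemiring R] (r x s : R) :
    ((1 : Matrix (Fin (M + 1)) (Fin (M + 1)) R) ⊗ₖ !![r, x; 0, s]).submatrix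
        (stagger M) (stagger M) =
      (1 : Matrix (Fin M) (Fin M) R) ⊗ₖ !![r, 0; 0, s] +
        (1 : Matrix (Fin (M + 1)) (Fin (M + 1)) R).submatrix Fin.succ Fin.castSucc ⊗ₖ
          !![0, x; 0, 0] := by
  ext ⟨i, a⟩ ⟨j, b⟩
  fin_cases a <;> fin_cases b <;> simp [stagger, one_apply]

variable [CommRing R]

/-- The common shape of `U₁`, `U₂` and `V`: the basis given by the columns of `Q` in every copy,
regrouped along `stagger M`, followed by the change of basis `X` within every pair. -/
def staggeredProduct (M : ℕ) (Q X : Matrix (Fin 2) (Fin 2) R) :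
    Matrix (Fin (M + 1) × Fin 2) (Fin M × Fin 2) R :=
  ((1 : Matrix (Fin (M + 1)) (Fin (M + 1)) R) ⊗ₖ Q).submatrix id (stagger M) *
    ((1 : Matrix (Fin M) (Fin M) R) ⊗ₖ X)

variable [StarRing R]

theorem conjTranspose_staggeredProduct_mul_mul {M : ℕ} (Q X A P Y : Matrix (Fin 2) (Fin 2) R) :
    (staggeredProduct M Q X)ᴴ * ((1 : Matrix (Fin (M + 1)) (Fin (M + 1)) R) ⊗ₖ A) *
        staggeredProduct M P Y =
      ((1 : Matrix (Fin M) (Fin M) R) ⊗ₖ X)ᴴ *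
        ((1 : Matrix (Fin (M + 1)) (Fin (M + 1)) R) ⊗ₖ (Qᴴ * A * P)).submatrix
          (stagger M) (stagger M) *
        ((1 : Matrix (Fin M) (Fin M) R) ⊗ₖ Y) := by
  have hQAP : (1 : Matrix (Fin (M + 1)) (Fin (M + 1)) R) ⊗ₖ (Qᴴ * A * P) =
      (1 ⊗ₖ Q)ᴴ * ((1 : Matrix (Fin (M + 1)) (Fin (M + 1)) R) ⊗ₖ A) * (1 ⊗ₖ P) := by
    simp [conjTranspose_kronecker, ← mul_kronecker_mul]
  rw [hQAP, submatrix_mul _ _ _ id _ Function.bijective_id,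
    submatrix_mul _ _ _ id _ Function.bijective_id, submatrix_id_id]
  simp only [staggeredProduct, conjTranspose_mul, conjTranspose_submatrix, Matrix.mul_assoc]

theorem conjTranspose_staggeredProduct_mul_self {M : ℕ} {Q X : Matrix (Fin 2) (Fin 2) R}
    (hQ : Q ∈ unitaryGroup (Fin 2) R) (hX : X ∈ unitaryGroup (Fin 2) R) :
    (staggeredProduct M Q X)ᴴ * staggeredProduct M Q X = 1 := by
  have hQQ : Qᴴ * Q = 1 := mem_unitaryGroup_iff'.1 hQ
  have hXX : Xᴴ * X = 1 := mem_unitaryGroup_iff'.1 hX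
  simpa [hQQ, hXX, submatrix_one _ (stagger_injective M), conjTranspose_kronecker,
    ← mul_kronecker_mul] using conjTranspose_staggeredProduct_mul_mul (M := M) Q X 1 Q X

theorem isUnitriangular_staggeredProduct {M : ℕ} {Q A P X Y : Matrix (Fin 2) (Fin 2) R}
    {r x s t : R} (hA : Qᴴ * A * P = !![r, x; 0, s])
    (hX : Xᴴ * !![r, 0; 0, s] * Y = !![1, t; 0, 1]) :
    IsUnitriangular ((staggeredProduct M Q X)ᴴ *
      ((1 : Matrix (Fin (M + 1)) (Fin (M + 1)) R) ⊗ₖ A) * staggeredProduct M P Y) toLex := by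
  have hT : IsUnitriangular !![1, t; 0, 1] id := by
    refine ⟨fun a b h ↦ ?_, fun a ↦ by fin_cases a <;> rfl⟩
    obtain ⟨rfl, rfl⟩ : a = 1 ∧ b = 0 := by simp only [id] at h; omega
    rfl
  rw [conjTranspose_staggeredProduct_mul_mul, hA, one_kronecker_submatrix_stagger,
    conjTranspose_kronecker, Matrix.mul_add, Matrix.add_mul]
  simp only [← mul_kronecker_mul, hX, conjTranspose_one, Matrix.mul_one, Matrix.one_mul]
  refine isUnitriangular_one_kronecker_add_kronecker hT (fun i j h ↦ ?_) _
  exact one_apply_ne (Fin.castSucc_lt_succ_iff.2 h).ne'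

end

theorem nearly_optimal_twoGMD_two_by_two_general {𝕜 : Type*} [RCLike 𝕜]
    {A₁ A₂ : Matrix (Fin 2) (Fin 2) 𝕜} (h₁ : ‖A₁.det‖ = 1) (h₂ : ‖A₂.det‖ = 1) (M : ℕ) :
    ∃ U₁ U₂ V : Matrix (Fin (M + 1) × Fin 2) (Fin (2 * M)) 𝕜,
      U₁ᴴ * U₁ = 1 ∧ U₂ᴴ * U₂ = 1 ∧ Vᴴ * V = 1 ∧
      IsUnitriangular (U₁ᴴ * ((1 : Matrix (Fin (M + 1)) (Fin (M + 1)) 𝕜) ⊗ₖ A₁) * V) id ∧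
      IsUnitriangular (U₂ᴴ * ((1 : Matrix (Fin (M + 1)) (Fin (M + 1)) 𝕜) ⊗ₖ A₂) * V) id := by
  obtain ⟨Q₁, hQ₁, Q₂, hQ₂, P, hP, r, s, x₁, x₂, hrs, hA₁, hA₂⟩ :=
    exists_common_triangularization (norm_ne_zero_iff.1 (h₂ ▸ one_ne_zero)) (h₁.trans h₂.symm)
  obtain ⟨X, hX, Y, hY, t, hXY⟩ := exists_geometric_mean_decomposition
    (A := !![(r : 𝕜), 0; 0, (s : 𝕜)]) (by simp [← abs_mul, hrs, h₂])
  let e : Fin (2 * M) ≃o Fin M ×ₗ Fin 2 :=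
    Fintype.orderIsoFinOfCardEq _ (by simp [Lex, mul_comm])
  let f (k : Fin (2 * M)) : Fin M × Fin 2 := ofLex (e k)
  have orth {Q X : Matrix (Fin 2) (Fin 2) 𝕜} (hQ : Q ∈ unitaryGroup (Fin 2) 𝕜)
      (hX : X ∈ unitaryGroup (Fin 2) 𝕜) :
      ((staggeredProduct M Q X).submatrix id f)ᴴ * (staggeredProduct M Q X).submatrix id f = 1 :=
    (congr_arg (submatrix · f f) (conjTranspose_staggeredProduct_mul_self hQ hX)).trans <|
      submatrix_one f (ofLex.injective.comp e.injective)
  exact ⟨(staggeredProduct M Q₁ X).submatrix id f, (staggeredProduct M Q₂ X).submatrix id f,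
    (staggeredProduct M P Y).submatrix id f, orth hQ₁ hX, orth hQ₂ hX, orth hP hY,
    (isUnitriangular_staggeredProduct hA₁ hXY).submatrix e.strictMono,
    (isUnitriangular_staggeredProduct hA₂ hXY).submatrix e.strictMono⟩

/-- Nearly-optimal 2-GMD for `2 × 2` matrices: for unit-determinant complex
`2 × 2` matrices `A₁, A₂` and any `N ≥ 2`, there are `2N × (2N - 2)` matrices
`U₁, U₂, V` with orthonormal columns simultaneously triangularizing the
block-diagonal extensions `I_N ⊗ Aᵢ` with all diagonal entries equal to `1`. -/
theorem nearly_optimal_twoGMD_two_by_two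
    (A₁ A₂ : Matrix (Fin 2) (Fin 2) ℂ) (h₁ : A₁.det = 1) (h₂ : A₂.det = 1)
    (N : ℕ) (hN : 2 ≤ N) :
    ∃ U₁ U₂ V : Matrix (Fin N × Fin 2) (Fin (2 * N - 2)) ℂ,
      U₁ᴴ * U₁ = 1 ∧ U₂ᴴ * U₂ = 1 ∧ Vᴴ * V = 1 ∧
      (∀ k l : Fin (2 * N - 2), l < k →
        (U₁ᴴ * ((1 : Matrix (Fin N) (Fin N) ℂ) ⊗ₖ A₁) * V) k l = 0) ∧
      (∀ k : Fin (2 * N - 2),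
        (U₁ᴴ * ((1 : Matrix (Fin N) (Fin N) ℂ) ⊗ₖ A₁) * V) k k = 1) ∧
      (∀ k l : Fin (2 * N - 2), l < k →
        (U₂ᴴ * ((1 : Matrix (Fin N) (Fin N) ℂ) ⊗ₖ A₂) * V) k l = 0) ∧
      (∀ k : Fin (2 * N - 2),
        (U₂ᴴ * ((1 : Matrix (Fin N) (Fin N) ℂ) ⊗ₖ A₂) * V) k k = 1) := by
  obtain ⟨M, rfl⟩ : ∃ M, N = M + 1 := ⟨N - 1, by omega⟩
  obtain ⟨U₁, U₂, V, hU₁, hU₂, hV, ht₁, ht₂⟩ := nearly_optimal_twoGMD_two_by_two_general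
    (A₁ := A₁) (A₂ := A₂) (by simp [h₁]) (by simp [h₂]) M
  exact ⟨U₁, U₂, V, hU₁, hU₂, hV, fun _ _ h ↦ ht₁.blockTriangular h, ht₁.diag_eq_one,
    fun _ _ h ↦ ht₂.blockTriangular h, ht₂.diag_eq_one⟩
end

section
/- Let K ≥ 1, n ≥ 1, and let A_1, …, A_K be n×n complex matrices, each with determinant 1. Then for every ε > 0 there exist an integer N ≥ 1, an integer m with m ≥ (1−ε)·nN, and K+1 matrices U_1, …, U_K, V of size nN × m with orthonormal columns, such that for every i = 1, …, K the m×m matrix U_iᴴ (I_N ⊗ A_i) V is upper triangular with all diagonal entries equal to 1. -/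
open Matrix Kronecker

/-!
The matrices are treated one at a time. A single `X` with `|det X| = 1` can be brought to upper
triangular form with unit diagonal by unitary matrices `U`, `V`: the eigenvalues of `Xᴴ X` are
nonnegative with product `1`, so `1` is a convex combination of them and `‖X v‖ = 1` for some unit
vector `v`; a QR decomposition after moving `v` to the first coordinate produces a first diagonal
entry of modulus one, and one continues with the trailing block. Any other matrix of the family can
be made upper triangular for the same `V` by QR, and a unitary one even becomes the identity, by
taking `U = X V`.

To pass to the next matrix without losing the unit diagonals, suppose that every matrix has been
compressed to a block upper triangular one with a constant, upper triangular diagonal block `X`, and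
take `n` copies of it. The window `s` consists, for each copy `c < n`, of the position `s + c` in
that copy. Different copies do not interact, so each window is a diagonal block equal to the
*diagonal* part of `X`, which is the identity for the matrices treated so far. Hence the next
matrix can be treated blockwise. From `p + 1` blocks per copy, `n` copies have `p n + 1` windows of
`n` positions each, so that after all rounds the lost fraction of the dimensions is still less than
`1 / (p + 1)`, with `p` as large as we like.
-/

section BorderOne

variable {R : Type*} {n : ℕ}

/-- The block-diagonal matrix `1 ⊕ M`, indexed by `Fin (n + 1)`; it lets a matrix act on the
trailing principal block only. -/
def borderOne [Zero R] [One R] (M : Matrix (Fin n) (Fin n) R) :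
    Matrix (Fin (n + 1)) (Fin (n + 1)) R :=
  of (Fin.cons (Fin.cons 1 0) fun i => Fin.cons 0 (M i))

section Semiring

variable [Semiring R] [StarRing R]

theorem submatrix_succ_borderOne_mul_mul (P Q : Matrix (Fin n) (Fin n) R)
    (Y : Matrix (Fin (n + 1)) (Fin (n + 1)) R) :
    ((borderOne P)ᴴ * Y * borderOne Q).submatrix Fin.succ Fin.succ =
      Pᴴ * Y.submatrix Fin.succ Fin.succ * Q := by
  ext i j
  simp [mul_apply, Fin.sum_univ_succ, borderOne]

theorem col_zero_borderOne_mul_mul (P Q : Matrix (Fin n) (Fin n) R)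
    {Y : Matrix (Fin (n + 1)) (Fin (n + 1)) R} (hY : Y.IsUpperTriangular) :
    ((borderOne P)ᴴ * Y * borderOne Q).col 0 = Pi.single 0 (Y 0 0) := by
  have hY₀ : ∀ i : Fin n, Y i.succ 0 = 0 := fun i => hY i.succ_pos
  ext i
  refine Fin.cases ?_ (fun i => ?_) i <;> simp [mul_apply, Fin.sum_univ_succ, borderOne, hY₀]

theorem conjTranspose_mul_self_apply_zero_zero {T : Matrix (Fin (n + 1)) (Fin (n + 1)) R}
    (hT : T.IsUpperTriangular) : (Tᴴ * T) 0 0 = star (T 0 0) * T 0 0 := by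
  have hT₀ : ∀ i : Fin n, T i.succ 0 = 0 := fun i => hT i.succ_pos
  simp [mul_apply, Fin.sum_univ_succ, hT₀]

end Semiring

variable [CommRing R]

theorem borderOne_mem_unitaryGroup [StarRing R] {U : Matrix (Fin n) (Fin n) R}
    (hU : U ∈ unitaryGroup (Fin n) R) : borderOne U ∈ unitaryGroup (Fin (n + 1)) R := by
  rw [mem_unitaryGroup_iff', star_eq_conjTranspose] at hU ⊢
  ext i j
  have h := congrFun₂ hU
  simp only [mul_apply, conjTranspose_apply] at h
  refine Fin.cases ?_ (fun i => ?_) i <;> refine Fin.cases ?_ (fun j => ?_) j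
  · simp [mul_apply, Fin.sum_univ_succ, borderOne]
  · simp [mul_apply, Fin.sum_univ_succ, borderOne, (Fin.succ_ne_zero j).symm]
  · simp [mul_apply, Fin.sum_univ_succ, borderOne]
  · simpa [mul_apply, Fin.sum_univ_succ, borderOne, one_apply] using h i j

theorem det_eq_apply_zero_mul_det_submatrix_succ {Y : Matrix (Fin (n + 1)) (Fin (n + 1)) R}
    (hY : Y.IsUpperTriangular) :
    Y.det = Y 0 0 * (Y.submatrix Fin.succ Fin.succ).det := by
  have hY₀ : ∀ i : Fin n, Y i.succ 0 = 0 := fun i => hY i.succ_pos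
  rw [det_succ_column_zero, Fin.sum_univ_succ]
  simp [hY₀]

end BorderOne

section UnitaryTriangularization

variable {𝕜 : Type*} [RCLike 𝕜]

theorem norm_det_of_mem_unitaryGroup_s8 {ι : Type*} [Fintype ι] [DecidableEq ι]
    {U : Matrix ι ι 𝕜} (hU : U ∈ unitaryGroup ι 𝕜) : ‖U.det‖ = 1 :=
  CStarRing.norm_of_mem_unitary (det_of_mem_unitary hU)

theorem norm_det_conjTranspose_mul_mul {ι : Type*} [Fintype ι] [DecidableEq ι]
    {U V : Matrix ι ι 𝕜} (hU : U ∈ unitaryGroup ι 𝕜) (hV : V ∈ unitaryGroup ι 𝕜)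
    (X : Matrix ι ι 𝕜) : ‖(Uᴴ * X * V).det‖ = ‖X.det‖ := by
  simp [det_mul, norm_det_of_mem_unitaryGroup_s8 hU, norm_det_of_mem_unitaryGroup_s8 hV]

theorem exists_unitary_isUpperTriangular_conjTranspose_mul {ι : Type*} [Fintype ι] [LinearOrder ι]
    [LocallyFiniteOrderBot ι] (X : Matrix ι ι 𝕜) :
    ∃ U ∈ unitaryGroup ι 𝕜, (Uᴴ * X).IsUpperTriangular := by
  let e := EuclideanSpace.basisFun ι 𝕜
  let f : ι → EuclideanSpace 𝕜 ι := fun j => WithLp.toLp 2 (X.col j)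
  obtain ⟨b, hb⟩ : ∃ b : OrthonormalBasis ι 𝕜 (EuclideanSpace 𝕜 ι),
      (b.toBasis.toMatrix f).IsUpperTriangular :=
    ⟨_, InnerProductSpace.gramSchmidtOrthonormalBasis_inv_isUpperTriangular
      finrank_euclideanSpace f⟩
  have hX : e.toBasis.toMatrix f = X := by
    ext i j
    simp [e, f, Module.Basis.toMatrix_apply]
  refine ⟨star (b.toBasis.toMatrix e),
    Unitary.star_mem (b.toMatrix_orthonormalBasis_mem_unitary e), ?_⟩
  rwa [star_eq_conjTranspose, conjTranspose_conjTranspose, ← hX, ← e.coe_toBasis,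
    Module.Basis.toMatrix_mul_toMatrix]

theorem exists_unitary_col_eq {ι : Type*} [Fintype ι] [DecidableEq ι] {v : ι → 𝕜}
    (hv : star v ⬝ᵥ v = 1) (i₀ : ι) : ∃ V ∈ unitaryGroup ι 𝕜, V.col i₀ = v := by
  let e := EuclideanSpace.basisFun ι 𝕜
  have hnorm : ‖(WithLp.toLp 2 v : EuclideanSpace 𝕜 ι)‖ = 1 := by
    rw [@norm_eq_sqrt_re_inner 𝕜, EuclideanSpace.inner_toLp_toLp, dotProduct_comm, hv]
    simp
  obtain ⟨b, hb⟩ := Orthonormal.exists_orthonormalBasis_extension_of_card_eq (𝕜 := 𝕜)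
    (finrank_euclideanSpace (ι := ι)) (v := fun _ => WithLp.toLp 2 v) (s := {i₀})
    ⟨fun _ => hnorm, Subsingleton.pairwise⟩
  refine ⟨e.toBasis.toMatrix b, e.toMatrix_orthonormalBasis_mem_unitary b, ?_⟩
  ext a
  simp [e, Module.Basis.toMatrix_apply, hb i₀ rfl]

theorem exists_mem_stdSimplex_sum_mul_eq_one {ι : Type*} [Fintype ι] [Nonempty ι] {f : ι → ℝ}
    (hf : ∀ i, 0 ≤ f i) (hprod : ∏ i, f i = 1) : ∃ w ∈ stdSimplex ℝ ι, ∑ i, w i * f i = 1 := by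
  classical
  have hpos : ∀ i, 0 < f i := fun i => (hf i).lt_of_ne' fun h => by
    simp [Finset.prod_eq_zero (Finset.mem_univ i) h] at hprod
  obtain ⟨a, ha⟩ : ∃ a, f a ≤ 1 := by
    by_contra! h
    have := Finset.prod_lt_prod_of_nonempty (fun _ _ => one_pos) (fun i _ => h i)
      Finset.univ_nonempty
    simp [hprod] at this
  obtain ⟨b, hb⟩ : ∃ b, 1 ≤ f b := by
    by_contra! h
    have := Finset.prod_lt_prod_of_nonempty (fun i _ => hpos i) (fun i _ => h i)
      Finset.univ_nonempty
    simp [hprod] at this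
  obtain ⟨s, t, hs, ht, hst, h⟩ : (1 : ℝ) ∈ segment ℝ (f a) (f b) :=
    segment_eq_Icc (ha.trans hb) ▸ ⟨ha, hb⟩
  refine ⟨s • Pi.single a 1 + t • Pi.single b 1, convex_stdSimplex ℝ ι
    (single_mem_stdSimplex ℝ a) (single_mem_stdSimplex ℝ b) hs ht hst, ?_⟩
  simpa [add_mul, Finset.sum_add_distrib, Pi.single_apply, ite_mul] using h

theorem exists_dotProduct_mulVec_eq_sum_mul_eigenvalues {ι : Type*} [Fintype ι] [DecidableEq ι]
    {H : Matrix ι ι 𝕜} (hH : H.IsHermitian) {w : ι → ℝ} (hw : w ∈ stdSimplex ℝ ι) :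
    ∃ v : ι → 𝕜, star v ⬝ᵥ v = 1 ∧
      star v ⬝ᵥ (H *ᵥ v) = ((∑ i, w i * hH.eigenvalues i : ℝ) : 𝕜) := by
  let Q : Matrix ι ι 𝕜 := hH.eigenvectorUnitary
  let y : ι → 𝕜 := fun i => (√(w i) : ℝ)
  have hQ : Qᴴ * Q = 1 := Unitary.coe_star_mul_self hH.eigenvectorUnitary
  have hHQ : Qᴴ * H * Q = diagonal (RCLike.ofReal ∘ hH.eigenvalues) := by
    rw [← hH.conjStarAlgAut_star_eigenvectorUnitary, Unitary.conjStarAlgAut_star_apply]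
    rfl
  have hy : ∀ i, star (y i) * y i = (w i : 𝕜) := fun i => by
    simp only [y, RCLike.star_def, RCLike.conj_ofReal]
    rw [← RCLike.ofReal_mul, Real.mul_self_sqrt (hw.1 i)]
  have hquad (B : Matrix ι ι 𝕜) :
      star (Q *ᵥ y) ⬝ᵥ (B *ᵥ (Q *ᵥ y)) =
        star y ⬝ᵥ ((Qᴴ * B * Q) *ᵥ y) := by
    rw [star_mulVec, ← dotProduct_mulVec, mulVec_mulVec, mulVec_mulVec, Matrix.mul_assoc]
  refine ⟨Q *ᵥ y, ?_, ?_⟩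
  · have := hquad 1
    rw [one_mulVec, Matrix.mul_one, hQ, one_mulVec] at this
    rw [this, dotProduct]
    simp only [Pi.star_apply, hy]
    exact_mod_cast hw.2
  · rw [hquad, hHQ]
    simp only [dotProduct, mulVec_diagonal, Pi.star_apply, Function.comp_apply]
    push_cast
    refine Finset.sum_congr rfl fun i _ => ?_
    rw [mul_left_comm, hy, mul_comm]

open scoped ComplexOrder in
theorem exists_dotProduct_conjTranspose_mul_self_mulVec_eq_one {ι : Type*}
    [Fintype ι] [DecidableEq ι] [Nonempty ι] {X : Matrix ι ι 𝕜}
    (hX : ‖X.det‖ = 1) : ∃ v : ι → 𝕜, star v ⬝ᵥ v = 1 ∧ star v ⬝ᵥ ((Xᴴ * X) *ᵥ v) = 1 := by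
  have hH : (Xᴴ * X).IsHermitian := isHermitian_conjTranspose_mul_self X
  have hprod : ∏ i, hH.eigenvalues i = 1 := by
    have hdet : ((∏ i, hH.eigenvalues i : ℝ) : 𝕜) = 1 := by
      rw [RCLike.ofReal_prod, ← hH.det_eq_prod_eigenvalues, det_mul, det_conjTranspose,
        RCLike.star_def, RCLike.conj_mul, hX]
      simp
    exact_mod_cast hdet
  obtain ⟨w, hw, hsum⟩ := exists_mem_stdSimplex_sum_mul_eq_one
    (posSemidef_conjTranspose_mul_self X).eigenvalues_nonneg hprod
  simpa only [hsum, RCLike.ofReal_one] using exists_dotProduct_mulVec_eq_sum_mul_eigenvalues hH hw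

theorem exists_unitary_norm_apply_zero_eq_one {n : ℕ} {X : Matrix (Fin (n + 1)) (Fin (n + 1)) 𝕜}
    (hX : ‖X.det‖ = 1) :
    ∃ U ∈ unitaryGroup (Fin (n + 1)) 𝕜, ∃ V ∈ unitaryGroup (Fin (n + 1)) 𝕜,
      (Uᴴ * X * V).IsUpperTriangular ∧ ‖(Uᴴ * X * V) 0 0‖ = 1 := by
  obtain ⟨v, hv, hXv⟩ := exists_dotProduct_conjTranspose_mul_self_mulVec_eq_one hX
  obtain ⟨V, hV, rfl⟩ := exists_unitary_col_eq hv 0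
  obtain ⟨U, hU, hT⟩ := exists_unitary_isUpperTriangular_conjTranspose_mul (X * V)
  rw [← Matrix.mul_assoc] at hT
  refine ⟨U, hU, V, hV, hT, ?_⟩
  have hgram : (Uᴴ * X * V)ᴴ * (Uᴴ * X * V) = Vᴴ * (Xᴴ * X) * V := by
    have hUU : U * Uᴴ = 1 := mem_unitaryGroup_iff.1 hU
    simp only [conjTranspose_mul, conjTranspose_conjTranspose, Matrix.mul_assoc]
    rw [← Matrix.mul_assoc U, hUU, Matrix.one_mul]
  have hsq : star ((Uᴴ * X * V) 0 0) * (Uᴴ * X * V) 0 0 = 1 := by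
    rw [← conjTranspose_mul_self_apply_zero_zero hT, hgram, Matrix.mul_assoc, ← hXv]
    rfl
  exact CStarRing.norm_of_mem_unitary (Unitary.mem_iff_star_mul_self.2 hsq)

theorem exists_unitary_isUpperTriangular_norm_diag_eq_one {n : ℕ} {X : Matrix (Fin n) (Fin n) 𝕜}
    (hX : ‖X.det‖ = 1) :
    ∃ U ∈ unitaryGroup (Fin n) 𝕜, ∃ V ∈ unitaryGroup (Fin n) 𝕜,
      (Uᴴ * X * V).IsUpperTriangular ∧ ∀ r, ‖(Uᴴ * X * V) r r‖ = 1 := by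
  induction n with
  | zero => exact ⟨1, one_mem _, 1, one_mem _, fun i => i.elim0, fun i => i.elim0⟩
  | succ n ih =>
    obtain ⟨U, hU, V, hV, hY, hY₀⟩ := exists_unitary_norm_apply_zero_eq_one hX
    set Y := Uᴴ * X * V with hYdef
    have hdet : ‖(Y.submatrix Fin.succ Fin.succ).det‖ = 1 := by
      have h := norm_det_conjTranspose_mul_mul hU hV X
      rwa [← hYdef, det_eq_apply_zero_mul_det_submatrix_succ hY, norm_mul, hY₀, one_mul, hX] at h
    obtain ⟨P, hP, Q, hQ, hT, hT₁⟩ := ih hdet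
    have hcomp : (U * borderOne P)ᴴ * X * (V * borderOne Q) = (borderOne P)ᴴ * Y * borderOne Q := by
      simp only [hYdef, conjTranspose_mul, Matrix.mul_assoc]
    have hcol (i) := congrFun (col_zero_borderOne_mul_mul P Q hY) i
    have hsub (i j) := congrFun₂ (submatrix_succ_borderOne_mul_mul P Q Y) i j
    simp only [col_apply, submatrix_apply] at hcol hsub
    refine ⟨U * borderOne P, mul_mem hU (borderOne_mem_unitaryGroup hP),
      V * borderOne Q, mul_mem hV (borderOne_mem_unitaryGroup hQ), ?_, ?_⟩ <;> rw [hcomp]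
    · intro i j hij
      obtain ⟨i, rfl⟩ := Fin.exists_succ_eq.2 (Fin.ne_zero_of_lt hij)
      refine Fin.cases (fun _ => ?_) (fun j hij => ?_) j hij
      · rw [hcol, Pi.single_eq_of_ne i.succ_ne_zero]
      · rw [hsub]
        exact hT (Fin.succ_lt_succ_iff.1 hij)
    · intro r
      refine Fin.cases ?_ (fun r => ?_) r
      · rw [hcol, Pi.single_eq_same, hY₀]
      · rw [hsub, hT₁]

theorem exists_unitary_isUpperTriangular_diag_eq_one {n : ℕ} {X : Matrix (Fin n) (Fin n) 𝕜}
    (hX : ‖X.det‖ = 1) :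
    ∃ U ∈ unitaryGroup (Fin n) 𝕜, ∃ V ∈ unitaryGroup (Fin n) 𝕜,
      (Uᴴ * X * V).IsUpperTriangular ∧ (Uᴴ * X * V).diag = 1 := by
  obtain ⟨U, hU, V, hV, hT, hdiag⟩ := exists_unitary_isUpperTriangular_norm_diag_eq_one hX
  set D := diagonal (Uᴴ * X * V).diag
  have hphase : ∀ r, star ((Uᴴ * X * V) r r) * (Uᴴ * X * V) r r = 1 := fun r => by
    rw [RCLike.star_def, RCLike.conj_mul, hdiag]
    simp
  have hDU : D ∈ unitaryGroup (Fin n) 𝕜 := by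
    rw [mem_unitaryGroup_iff', star_eq_conjTranspose, diagonal_conjTranspose,
      diagonal_mul_diagonal, ← diagonal_one]
    exact congrArg diagonal (funext hphase)
  have hmul : (U * D)ᴴ * X * V = diagonal (star (Uᴴ * X * V).diag) * (Uᴴ * X * V) := by
    rw [conjTranspose_mul, diagonal_conjTranspose]
    simp only [Matrix.mul_assoc]
  refine ⟨U * D, mul_mem hU hDU, V, hV, ?_, ?_⟩ <;> rw [hmul]
  · exact (blockTriangular_diagonal _).mul hT
  · ext r
    rw [diag_apply, diagonal_mul]
    exact hphase r

theorem exists_unitary_forall_isUpperTriangular {ι : Type*} {n : ℕ}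
    {X : ι → Matrix (Fin n) (Fin n) 𝕜} {s : Set ι} (hs : ∀ i ∈ s, X i ∈ unitaryGroup (Fin n) 𝕜)
    {a : ι} (ha : ‖(X a).det‖ = 1) :
    ∃ (U : ι → Matrix (Fin n) (Fin n) 𝕜) (V : Matrix (Fin n) (Fin n) 𝕜),
      (∀ i, U i ∈ unitaryGroup (Fin n) 𝕜) ∧ V ∈ unitaryGroup (Fin n) 𝕜 ∧
      (∀ i, ((U i)ᴴ * X i * V).IsUpperTriangular) ∧
      ∀ i ∈ insert a s, ((U i)ᴴ * X i * V).diag = 1 := by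
  obtain ⟨U₀, hU₀, V, hV, hT₀, hdiag₀⟩ := exists_unitary_isUpperTriangular_diag_eq_one ha
  have hU : ∀ i, ∃ U ∈ unitaryGroup (Fin n) 𝕜, (Uᴴ * X i * V).IsUpperTriangular ∧
      (i ∈ insert a s → (Uᴴ * X i * V).diag = 1) := by
    intro i
    by_cases hi : i ∈ insert a s
    · rcases hi with rfl | his
      · exact ⟨U₀, hU₀, hT₀, fun _ => hdiag₀⟩
      · have hXV : X i * V ∈ unitaryGroup (Fin n) 𝕜 := mul_mem (hs i his) hV
        have hone : (X i * V)ᴴ * X i * V = 1 := by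
          rw [Matrix.mul_assoc]
          exact mem_unitaryGroup_iff'.1 hXV
        exact ⟨X i * V, hXV, hone ▸ blockTriangular_one, fun _ => hone ▸ diag_one⟩
    · obtain ⟨U, hU, hT⟩ := exists_unitary_isUpperTriangular_conjTranspose_mul (X i * V)
      exact ⟨U, hU, by rwa [Matrix.mul_assoc], fun h => absurd h hi⟩
  choose U hU hT hdiag using hU
  exact ⟨U, V, hU, hV, hT, hdiag⟩

end UnitaryTriangularization

section JointCompression

variable {ι R : Type*} [CommSemiring R] [StarRing R]
  {α β γ δ ε ζ : Type*} [Fintype α] [Fintype β] [DecidableEq γ] [DecidableEq δ]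

/-- `T` is a joint compression of the family `A`: there are matrices `U i` and one common matrix
`V`, all with orthonormal columns, such that `(U i)ᴴ * A i * V = T i` for every `i`. -/
def IsJointCompression (A : ι → Matrix α β R) (T : ι → Matrix γ δ R) : Prop :=
  ∃ (U : ι → Matrix α γ R) (V : Matrix β δ R),
    (∀ i, (U i)ᴴ * U i = 1) ∧ Vᴴ * V = 1 ∧ ∀ i, (U i)ᴴ * A i * V = T i

theorem conjTranspose_mul_self_submatrix_id [DecidableEq ε] {U : Matrix α γ R} (hU : Uᴴ * U = 1)
    {f : ε → γ} (hf : f.Injective) : (U.submatrix id f)ᴴ * U.submatrix id f = 1 := by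
  rw [conjTranspose_submatrix, ← submatrix_mul _ _ _ _ _ Function.bijective_id, hU,
    submatrix_one _ hf]

namespace IsJointCompression

theorem refl [DecidableEq α] [DecidableEq β] (A : ι → Matrix α β R) : IsJointCompression A A :=
  ⟨fun _ => 1, 1, by simp, by simp, by simp⟩

theorem trans [Fintype γ] [Fintype δ] [DecidableEq ε] [DecidableEq ζ] {A : ι → Matrix α β R}
    {B : ι → Matrix γ δ R} {C : ι → Matrix ε ζ R} (hAB : IsJointCompression A B)
    (hBC : IsJointCompression B C) : IsJointCompression A C := by
  obtain ⟨U, V, hU, hV, hAB⟩ := hAB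
  obtain ⟨P, Q, hP, hQ, hBC⟩ := hBC
  refine ⟨fun i => U i * P i, V * Q, fun i => ?_, ?_, fun i => ?_⟩
  · rw [conjTranspose_mul, Matrix.mul_assoc, ← Matrix.mul_assoc _ (U i), hU, Matrix.one_mul, hP]
  · rw [conjTranspose_mul, Matrix.mul_assoc, ← Matrix.mul_assoc _ V, hV, Matrix.one_mul, hQ]
  · rw [← hBC, ← hAB]
    simp only [conjTranspose_mul, Matrix.mul_assoc]

theorem submatrix [DecidableEq ε] [DecidableEq ζ] {A : ι → Matrix α β R} {T : ι → Matrix γ δ R}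
    (h : IsJointCompression A T) {f : ε → γ} {g : ζ → δ} (hf : f.Injective) (hg : g.Injective) :
    IsJointCompression A fun i => (T i).submatrix f g := by
  obtain ⟨U, V, hU, hV, hT⟩ := h
  refine ⟨fun i => (U i).submatrix id f, V.submatrix id g,
    fun i => conjTranspose_mul_self_submatrix_id (hU i) hf,
    conjTranspose_mul_self_submatrix_id hV hg, fun i => ?_⟩
  simp only [← hT, conjTranspose_submatrix]
  rw [submatrix_mul _ _ _ id _ Function.bijective_id,
    submatrix_mul _ _ _ id _ Function.bijective_id, submatrix_id_id]

theorem one_kronecker {κ : Type*} [Fintype κ] [DecidableEq κ] {A : ι → Matrix α β R}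
    {T : ι → Matrix γ δ R} (h : IsJointCompression A T) :
    IsJointCompression (fun i => (1 : Matrix κ κ R) ⊗ₖ A i)
      (fun i => (1 : Matrix κ κ R) ⊗ₖ T i) := by
  obtain ⟨U, V, hU, hV, hT⟩ := h
  refine ⟨fun i => 1 ⊗ₖ U i, 1 ⊗ₖ V, fun i => ?_, ?_, fun i => ?_⟩
  · simp [conjTranspose_kronecker, ← mul_kronecker_mul, hU]
  · simp [conjTranspose_kronecker, ← mul_kronecker_mul, hV]
  · simp [conjTranspose_kronecker, ← mul_kronecker_mul, hT]

theorem one_kronecker_mul_mul {κ : Type*} [Fintype κ] [DecidableEq κ]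
    (B : ι → Matrix (κ × α) (κ × β) R) {U : ι → Matrix α γ R} {V : Matrix β δ R}
    (hU : ∀ i, (U i)ᴴ * U i = 1) (hV : Vᴴ * V = 1) :
    IsJointCompression B fun i =>
      ((1 : Matrix κ κ R) ⊗ₖ (U i)ᴴ) * B i * ((1 : Matrix κ κ R) ⊗ₖ V) := by
  refine ⟨fun i => 1 ⊗ₖ U i, 1 ⊗ₖ V, fun i => ?_, ?_, fun i => ?_⟩
  · simp [conjTranspose_kronecker, ← mul_kronecker_mul, hU]
  · simp [conjTranspose_kronecker, ← mul_kronecker_mul, hV]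
  · simp [conjTranspose_kronecker]

theorem one_kronecker_one_kronecker [DecidableEq α] [DecidableEq β] (A : ι → Matrix α β R)
    (k N : ℕ) :
    IsJointCompression (fun i => (1 : Matrix (Fin (k * N)) (Fin (k * N)) R) ⊗ₖ A i)
      (fun i => (1 : Matrix (Fin k) (Fin k) R) ⊗ₖ ((1 : Matrix (Fin N) (Fin N) R) ⊗ₖ A i)) := by
  let row : Fin k × (Fin N × α) ≃ Fin (k * N) × α :=
    (Equiv.prodAssoc _ _ _).symm.trans (finProdFinEquiv.prodCongr (Equiv.refl α))
  let col : Fin k × (Fin N × β) ≃ Fin (k * N) × β :=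
    (Equiv.prodAssoc _ _ _).symm.trans (finProdFinEquiv.prodCongr (Equiv.refl β))
  have hA : ∀ i, (1 : Matrix (Fin k) (Fin k) R) ⊗ₖ ((1 : Matrix (Fin N) (Fin N) R) ⊗ₖ A i) =
      ((1 : Matrix (Fin (k * N)) (Fin (k * N)) R) ⊗ₖ A i).submatrix row col := fun i => by
    rw [← kronecker_assoc, one_kronecker_one]
    ext ⟨a, b, r⟩ ⟨a', b', r'⟩
    simp [row, col, one_apply]
  simp only [hA]
  exact (refl _).submatrix row.injective col.injective

end IsJointCompression

end JointCompression

section ConstDiagBlock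

/-- `B` is block upper triangular in its first index, and all its diagonal blocks equal `X`. -/
structure HasConstDiagBlock {μ ν R : Type*} [LT μ] [Zero R] (B : Matrix (μ × ν) (μ × ν) R)
    (X : Matrix ν ν R) : Prop where
  blockTriangular : B.BlockTriangular Prod.fst
  diag_block : ∀ s, B.submatrix (Prod.mk s) (Prod.mk s) = X

theorem submatrix_mk_one_kronecker_mul_mul {R μ κ ν ξ τ : Type*} [CommSemiring R] [Fintype μ]
    [DecidableEq μ] [Fintype ν] [Fintype ξ] (P : Matrix κ ν R) (B : Matrix (μ × ν) (μ × ξ) R)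
    (Q : Matrix ξ τ R) (s t : μ) :
    (((1 : Matrix μ μ R) ⊗ₖ P) * B * ((1 : Matrix μ μ R) ⊗ₖ Q)).submatrix
        (Prod.mk s) (Prod.mk t) = P * B.submatrix (Prod.mk s) (Prod.mk t) * Q := by
  ext r r'
  simp [mul_apply, Fintype.sum_prod_type, one_apply, Finset.sum_ite_irrel]

namespace HasConstDiagBlock

theorem one_kronecker {μ ν R : Type*} [Preorder μ] [DecidableEq μ] [NonAssocSemiring R]
    (X : Matrix ν ν R) :
    HasConstDiagBlock ((1 : Matrix μ μ R) ⊗ₖ X) X where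
  blockTriangular := fun ⟨s, r⟩ ⟨s', r'⟩ h => by
    rw [kronecker_apply, one_apply_ne h.ne', zero_mul]
  diag_block s := by
    ext r r'
    simp

theorem one_kronecker_mul_mul {μ ν R : Type*} [Fintype μ] [LT μ] [DecidableEq μ] [Fintype ν]
    [CommSemiring R] {B : Matrix (μ × ν) (μ × ν) R} {X : Matrix ν ν R} (h : HasConstDiagBlock B X)
    (P Q : Matrix ν ν R) :
    HasConstDiagBlock (((1 : Matrix μ μ R) ⊗ₖ P) * B * ((1 : Matrix μ μ R) ⊗ₖ Q)) (P * X * Q) where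
  blockTriangular := fun ⟨s, r⟩ ⟨s', r'⟩ hs => by
    have hB : B.submatrix (Prod.mk s) (Prod.mk s') = 0 := by
      ext q q'
      exact h.blockTriangular hs
    have := congrFun₂ (submatrix_mk_one_kronecker_mul_mul P B Q s s') r r'
    rwa [hB, Matrix.mul_zero, Matrix.zero_mul] at this
  diag_block s := by rw [submatrix_mk_one_kronecker_mul_mul, h.diag_block]

theorem isUpperTriangular_submatrix {M n : ℕ} {R : Type*} [Zero R]
    {B : Matrix (Fin M × Fin n) (Fin M × Fin n) R} {X : Matrix (Fin n) (Fin n) R}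
    (h : HasConstDiagBlock B X) (hX : X.IsUpperTriangular) :
    (B.submatrix finProdFinEquiv.symm finProdFinEquiv.symm).IsUpperTriangular := by
  intro j k hkj
  have hle : k.divNat ≤ j.divNat := Nat.div_le_div_right (Fin.val_fin_le.2 hkj.le)
  rcases hle.lt_or_eq with hlt | heq
  · exact h.blockTriangular hlt
  · have hmod : k.modNat < j.modNat := by
      have hdiv : (k : ℕ) / n = j / n := Fin.val_eq_of_eq heq
      have hval : (k : ℕ) < j := hkj
      change (k : ℕ) % n < j % n
      have hk := Nat.div_add_mod (k : ℕ) n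
      have hj := Nat.div_add_mod (j : ℕ) n
      rw [hdiv] at hk
      omega
    have hentry := congrFun₂ (h.diag_block j.divNat) j.modNat k.modNat
    change B (j.divNat, j.modNat) (k.divNat, k.modNat) = 0
    rw [heq]
    exact hentry.trans (hX hmod)

theorem apply_self {μ ν R : Type*} [LT μ] [Zero R] {B : Matrix (μ × ν) (μ × ν) R}
    {X : Matrix ν ν R} (h : HasConstDiagBlock B X) (x : μ × ν) : B x x = X x.2 x.2 :=
  congrFun₂ (h.diag_block x.1) x.2 x.2

end HasConstDiagBlock

section Window

variable {n p : ℕ} [NeZero n]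

/-- The copy from which the window starting at position `s` takes its entry of residue `r`
modulo `n`: copy `c` contributes position `s + c`, so that `c ≡ r - s`. -/
def windowCopy (x : Fin (p * n + 1) × Fin n) : Fin n :=
  x.2 - Fin.ofNat n x.1

/-- The position `s + c` at which the window `x = (s, r)` meets its copy `c = windowCopy x`. -/
def windowPos (x : Fin (p * n + 1) × Fin n) : Fin ((p + 1) * n) :=
  ⟨x.1 + windowCopy x, by have := (windowCopy x).2; have := x.1.2; rw [Nat.add_one_mul]; omega⟩

theorem modNat_windowPos (x : Fin (p * n + 1) × Fin n) : (windowPos x).modNat = x.2 := by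
  have h : Fin.ofNat n (x.1 + (windowCopy x : ℕ)) = x.2 := by
    rw [← Fin.ofNat_add, windowCopy, add_sub_cancel]
  exact h

/-- The index, in `n` copies of a matrix indexed by blocks and residues, which occupies place `r` of
the window `s`. -/
def window (x : Fin (p * n + 1) × Fin n) : Fin n × (Fin (p + 1) × Fin n) :=
  (windowCopy x, finProdFinEquiv.symm (windowPos x))

theorem window_injective : (window (n := n) (p := p)).Injective := by
  intro x y hxy
  obtain ⟨hcopy, hpos⟩ := Prod.ext_iff.1 hxy
  have hpos : windowPos x = windowPos y := finProdFinEquiv.symm.injective hpos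
  have hcopy : windowCopy x = windowCopy y := hcopy
  have hval : (x.1 : ℕ) + windowCopy x = y.1 + windowCopy y := congrArg Fin.val hpos
  refine Prod.ext (Fin.ext ?_) ?_
  · rw [hcopy] at hval
    omega
  · rw [← modNat_windowPos x, hpos, modNat_windowPos]

theorem HasConstDiagBlock.submatrix_window {R : Type*} [NonAssocSemiring R]
    {B : Matrix (Fin (p + 1) × Fin n) (Fin (p + 1) × Fin n) R} {X : Matrix (Fin n) (Fin n) R}
    (h : HasConstDiagBlock B X) (hX : X.IsUpperTriangular) :
    HasConstDiagBlock (((1 : Matrix (Fin n) (Fin n) R) ⊗ₖ B).submatrix window window)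
      (diagonal X.diag) where
  blockTriangular := fun x y hyx => by
    change (1 : Matrix (Fin n) (Fin n) R) (windowCopy x) (windowCopy y) * _ = 0
    by_cases hc : windowCopy x = windowCopy y
    · have hpos : windowPos y < windowPos x := by
        change (y.1 : ℕ) + windowCopy y < x.1 + windowCopy x
        rw [hc]
        exact Nat.add_lt_add_right hyx _
      exact mul_eq_zero_of_right _ (h.isUpperTriangular_submatrix hX hpos)
    · rw [one_apply_ne hc, zero_mul]
  diag_block s := by
    ext r r'
    rw [submatrix_apply, submatrix_apply, kronecker_apply]
    by_cases hr : r = r'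
    · subst hr
      rw [h.apply_self]
      have : (window (s, r)).2.2 = r := modNat_windowPos (s, r)
      simp [this]
    · have hc : windowCopy (s, r) ≠ windowCopy (s, r') := fun hc => hr (sub_left_injective hc)
      rw [diagonal_apply_ne _ hr]
      exact mul_eq_zero_of_left (one_apply_ne hc) _

end Window

end ConstDiagBlock

section PartialGMD

variable {𝕜 ι : Type*} [RCLike 𝕜] {n : ℕ}

/-- The state of the construction after the matrices with index in `s` have been treated: the
`N`-fold extension of the family `A` has a joint compression to block upper triangular matrices with
`M × M` blocks, where the `i`-th matrix has constant diagonal block `X i` with determinant of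
modulus one, and `X i = 1` for `i ∈ s`. -/
def HasPartialGMD (A : ι → Matrix (Fin n) (Fin n) 𝕜) (s : Set ι) (N M : ℕ) : Prop :=
  ∃ (B : ι → Matrix (Fin M × Fin n) (Fin M × Fin n) 𝕜) (X : ι → Matrix (Fin n) (Fin n) 𝕜),
    IsJointCompression (fun i => (1 : Matrix (Fin N) (Fin N) 𝕜) ⊗ₖ A i) B ∧
    (∀ i, HasConstDiagBlock (B i) (X i)) ∧ (∀ i, ‖(X i).det‖ = 1) ∧ ∀ i ∈ s, X i = 1

namespace HasPartialGMD

variable {A : ι → Matrix (Fin n) (Fin n) 𝕜}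

theorem empty (hA : ∀ i, ‖(A i).det‖ = 1) (N : ℕ) : HasPartialGMD A ∅ N N :=
  ⟨_, A, .refl _, fun i => .one_kronecker (A i), hA, fun _ hi => hi.elim⟩

theorem insert [NeZero n] {s : Set ι} {N p : ℕ} (h : HasPartialGMD A s N (p + 1)) (a : ι) :
    HasPartialGMD A (insert a s) (n * N) (p * n + 1) := by
  obtain ⟨B, X, hAB, hBX, hX, hXs⟩ := h
  obtain ⟨U, V, hU, hV, hT, hdiag⟩ := exists_unitary_forall_isUpperTriangular
    (fun i hi => hXs i hi ▸ one_mem _ : ∀ i ∈ s, X i ∈ unitaryGroup (Fin n) 𝕜) (hX a)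
  have hcomp : IsJointCompression (fun i => (1 : Matrix (Fin N) (Fin N) 𝕜) ⊗ₖ A i) fun i =>
      ((1 : Matrix (Fin (p + 1)) (Fin (p + 1)) 𝕜) ⊗ₖ (U i)ᴴ) * B i *
        ((1 : Matrix (Fin (p + 1)) (Fin (p + 1)) 𝕜) ⊗ₖ V) :=
    hAB.trans (.one_kronecker_mul_mul B (fun i => mem_unitaryGroup_iff'.1 (hU i))
      (mem_unitaryGroup_iff'.1 hV))
  have hblock (i) := (hBX i).one_kronecker_mul_mul (U i)ᴴ V
  refine ⟨_, fun i => diagonal ((U i)ᴴ * X i * V).diag,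
    ((IsJointCompression.one_kronecker_one_kronecker A n N).trans hcomp.one_kronecker).submatrix
      window_injective window_injective,
    fun i => (hblock i).submatrix_window (hT i), fun i => ?_, fun i hi => ?_⟩
  · rw [det_diagonal, ← hX i, ← norm_det_conjTranspose_mul_mul (hU i) hV (X i),
      det_of_isUpperTriangular (hT i)]
    rfl
  · change diagonal ((U i)ᴴ * X i * V).diag = 1
    rw [hdiag i hi]
    exact diagonal_one

theorem finset [NeZero n] (hA : ∀ i, ‖(A i).det‖ = 1) (p : ℕ) (s : Finset ι) :
    HasPartialGMD A s (n ^ s.card * (p + 1)) (p * n ^ s.card + 1) := by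
  classical
  induction s using Finset.induction_on with
  | empty => simpa using empty hA (p + 1)
  | insert a s has ih =>
    rw [Finset.coe_insert, Finset.card_insert_of_notMem has]
    convert ih.insert a using 1 <;> ring

end HasPartialGMD

theorem one_sub_mul_succ_le {ε : ℝ} {p : ℕ} (h : 1 / ((p : ℝ) + 1) < ε) :
    (1 - ε) * (p + 1) ≤ p := by
  rw [div_lt_iff₀ p.cast_add_one_pos] at h
  linarith

theorem nearly_optimal_KGMD_general [Finite ι] [NeZero n] (A : ι → Matrix (Fin n) (Fin n) 𝕜)
    (hdet : ∀ i, ‖(A i).det‖ = 1) {ε : ℝ} (hε : 0 < ε) :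
    ∃ N m : ℕ, 1 ≤ N ∧ (1 - ε) * (n * N : ℝ) ≤ m ∧
      ∃ (U : ι → Matrix (Fin N × Fin n) (Fin m) 𝕜) (V : Matrix (Fin N × Fin n) (Fin m) 𝕜),
        (∀ i, (U i)ᴴ * U i = 1) ∧ Vᴴ * V = 1 ∧
        ∀ i,
          (∀ k l : Fin m, l < k →
            ((U i)ᴴ * ((1 : Matrix (Fin N) (Fin N) 𝕜) ⊗ₖ A i) * V) k l = 0) ∧
          ∀ k : Fin m, ((U i)ᴴ * ((1 : Matrix (Fin N) (Fin N) 𝕜) ⊗ₖ A i) * V) k k = 1 := by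
  have := Fintype.ofFinite ι
  obtain ⟨p, hp⟩ := exists_nat_one_div_lt hε
  obtain ⟨q, hq, B, X, hAB, hBX, -, hX⟩ :
      ∃ q, 0 < q ∧ HasPartialGMD A Set.univ (q * (p + 1)) (p * q + 1) :=
    ⟨n ^ Fintype.card ι, pow_pos n.pos_of_neZero _, by
      simpa using HasPartialGMD.finset hdet p Finset.univ⟩
  have hB (i) : HasConstDiagBlock (B i) 1 := hX i trivial ▸ hBX i
  obtain ⟨U, V, hU, hV, hT⟩ :=
    hAB.submatrix finProdFinEquiv.symm.injective finProdFinEquiv.symm.injective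
  refine ⟨q * (p + 1), (p * q + 1) * n, Nat.mul_pos hq p.succ_pos, ?_, U, V, hU, hV, fun i => ?_⟩
  · push_cast
    calc (1 - ε) * (n * (q * (p + 1)) : ℝ) = n * q * ((1 - ε) * (p + 1)) := by ring
      _ ≤ n * q * p := by gcongr; exact one_sub_mul_succ_le hp
      _ ≤ (p * q + 1) * n := by linarith [(n.cast_nonneg : (0 : ℝ) ≤ n)]
  · rw [hT]
    exact ⟨fun k l hlk => (hB i).isUpperTriangular_submatrix blockTriangular_one hlk,
      fun k => ((hB i).apply_self _).trans (one_apply_eq _)⟩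

end PartialGMD

/-- Nearly-optimal `K`-GMD: for unit-determinant complex `n × n` matrices
`A 1, …, A K` and any `ε > 0`, there are `N`, a dimension `m ≥ (1 - ε) n N`,
and `nN × m` matrices `U 1, …, U K, V` with orthonormal columns such that every
`(U i)ᴴ * (I_N ⊗ A i) * V` is upper triangular with unit diagonal. -/
theorem nearly_optimal_KGMD (K n : ℕ) (hK : 1 ≤ K) (hn : 1 ≤ n)
    (A : Fin K → Matrix (Fin n) (Fin n) ℂ) (hdet : ∀ i, (A i).det = 1)
    (ε : ℝ) (hε : 0 < ε) :
    ∃ (N m : ℕ), 1 ≤ N ∧ (1 - ε) * (n * N : ℝ) ≤ (m : ℝ) ∧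
      ∃ (U : Fin K → Matrix (Fin N × Fin n) (Fin m) ℂ)
        (V : Matrix (Fin N × Fin n) (Fin m) ℂ),
        (∀ i, (U i)ᴴ * U i = 1) ∧ Vᴴ * V = 1 ∧
        ∀ i : Fin K,
          (∀ k l : Fin m, l < k →
            ((U i)ᴴ * ((1 : Matrix (Fin N) (Fin N) ℂ) ⊗ₖ A i) * V) k l = 0) ∧
          (∀ k : Fin m,
            ((U i)ᴴ * ((1 : Matrix (Fin N) (Fin N) ℂ) ⊗ₖ A i) * V) k k = 1) := by
  have : NeZero n := ⟨by omega⟩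
  exact nearly_optimal_KGMD_general A (fun i => by rw [hdet, norm_one]) hε
end

section
/- Fix a real R > 0 and let G_1 = diag(2^{R/2}, 1), G_2 = diag(2^{R/4}, 2^{R/4}), and let V be (2^{R/2} + 1)^{−1/2} times the matrix with rows (1, 2^{R/4}) and (2^{R/4}, −1). Then V is a real orthogonal matrix, and there exist real orthogonal 2×2 matrices U_1, U_2 such that for i = 1, 2 the matrix U_iᵀ G_i V is upper triangular with both diagonal entries equal to 2^{R/4}. -/
open Matrix

/-!
Write `a = 2 ^ (R / 4)`, so that `G₁ = diag(a², 1)` and `G₂ = a I`. The first column of `V` is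
`v = (1, a) / √(1 + a²)`, a unit vector which both channels stretch by the same factor:
`‖G₁ v‖ = ‖G₂ v‖ = a`. Since moreover `|det (Gᵢ V)| = a²`, in a QR decomposition of `Gᵢ V` both
diagonal entries of the triangular factor are `a` up to sign. The orthogonal factor is the
reflection taking the first basis vector to the direction of `Gᵢ v`, which is `(a, 1)` for `G₁`
and `(1, a)` for `G₂`.
-/

section Triangularization

variable {n A : Type*} [Fintype n] [DecidableEq n] [Preorder n] [CommRing A]

/-- An equi-diagonal triangularization of the channel matrix `G` with precoder `V`: the orthogonal
matrix `U` makes `Uᵀ * G * V` upper triangular with constant diagonal `d`. Orthogonality of `V` is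
not included, since `V` is shared by all the channels of a joint triangularization. -/
structure IsEquidiagonalTriangularization (U G V : Matrix n n A) (d : A) : Prop where
  orthogonal : Uᵀ * U = 1
  upperTriangular : (Uᵀ * G * V).BlockTriangular id
  diag_eq (k : n) : (Uᵀ * G * V) k k = d

theorem IsEquidiagonalTriangularization.of_mul_eq_mul {U G V T : Matrix n n A} {d : A}
    (hU : Uᵀ * U = 1) (hQR : G * V = U * T) (hT : T.BlockTriangular id) (hd : ∀ k, T k k = d) :
    IsEquidiagonalTriangularization U G V d := by
  have hUGV : Uᵀ * G * V = T := by
    rw [Matrix.mul_assoc, hQR, ← Matrix.mul_assoc, hU, Matrix.one_mul]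
  exact ⟨hU, hUGV ▸ hT, fun k ↦ hUGV ▸ hd k⟩

theorem isEquidiagonalTriangularization_scalar {V : Matrix n n A} (hV : Vᵀ * V = 1) (a : A) :
    IsEquidiagonalTriangularization V (scalar n a) V a :=
  .of_mul_eq_mul hV (scalar_comm a (Commute.all a) V) (blockTriangular_diagonal _)
    (diagonal_apply_eq _)

end Triangularization

section PlaneReflection

variable {A : Type*} [CommRing A]

/-- The matrix of a scaled reflection of the plane, whose first column is `(x, y)`. It is left
unnormalized so that it makes sense without square roots; orthogonal matrices are obtained from it
by multiplying with a scalar `c` such that `c ^ 2 * (x ^ 2 + y ^ 2) = 1`. -/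
def scaledReflection (x y : A) : Matrix (Fin 2) (Fin 2) A :=
  !![x, y; y, -x]

theorem scaledReflection_transpose_mul_self (x y : A) :
    (scaledReflection x y)ᵀ * scaledReflection x y = (x ^ 2 + y ^ 2) • 1 := by
  ext i j
  fin_cases i <;> fin_cases j <;> simp [scaledReflection, Matrix.mul_apply] <;> ring

theorem smul_scaledReflection_transpose_mul_self {c x y : A} (hc : c ^ 2 * (x ^ 2 + y ^ 2) = 1) :
    (c • scaledReflection x y)ᵀ * (c • scaledReflection x y) = 1 := by
  rw [transpose_smul, smul_mul_smul_comm, scaledReflection_transpose_mul_self, smul_smul, ← sq, hc,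
    one_smul]

theorem blockTriangular_id_fin_two (p q r : A) : !![p, q; 0, r].BlockTriangular id := by
  intro i j hij
  fin_cases i <;> fin_cases j <;> simp_all

theorem diag_sq_one_mul_scaledReflection (a : A) :
    !![a ^ 2, 0; 0, 1] * scaledReflection 1 a = scaledReflection a 1 * !![a, a ^ 2 - 1; 0, a] := by
  ext i j
  fin_cases i <;> fin_cases j <;> simp [scaledReflection] <;> ring

theorem isEquidiagonalTriangularization_diag_sq_one {a c : A} (hc : c ^ 2 * (a ^ 2 + 1) = 1) :
    IsEquidiagonalTriangularization (c • scaledReflection a 1) !![a ^ 2, 0; 0, 1]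
      (c • scaledReflection 1 a) a := by
  refine .of_mul_eq_mul (T := !![a, a ^ 2 - 1; 0, a])
    (smul_scaledReflection_transpose_mul_self (by rwa [one_pow])) ?_
    (blockTriangular_id_fin_two _ _ _) (Fin.forall_fin_two.2 ⟨rfl, rfl⟩)
  rw [Matrix.mul_smul, diag_sq_one_mul_scaledReflection, Matrix.smul_mul]

theorem two_rate_rateless_jet_general {a c : A} (hc : c ^ 2 * (a ^ 2 + 1) = 1) :
    (c • scaledReflection 1 a)ᵀ * (c • scaledReflection 1 a) = 1 ∧
    ∃ U₁ U₂ : Matrix (Fin 2) (Fin 2) A,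
      IsEquidiagonalTriangularization U₁ !![a ^ 2, 0; 0, 1] (c • scaledReflection 1 a) a ∧
      IsEquidiagonalTriangularization U₂ !![a, 0; 0, a] (c • scaledReflection 1 a) a := by
  have hV : (c • scaledReflection 1 a)ᵀ * (c • scaledReflection 1 a) = 1 :=
    smul_scaledReflection_transpose_mul_self (by rwa [one_pow, add_comm])
  have hG₂ : scalar (Fin 2) a = !![a, 0; 0, a] := diagonal_fin_two _
  exact ⟨hV, _, _, isEquidiagonalTriangularization_diag_sq_one hc,
    hG₂ ▸ isEquidiagonalTriangularization_scalar hV a⟩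

end PlaneReflection

theorem inv_sqrt_sq_mul_self {x : ℝ} (hx : 0 < x) : (√x)⁻¹ ^ 2 * x = 1 := by
  rw [inv_pow, Real.sq_sqrt hx.le, inv_mul_cancel₀ hx.ne']

theorem rpow_div_four_sq {b : ℝ} (hb : 0 ≤ b) (x : ℝ) : (b ^ (x / 4)) ^ 2 = b ^ (x / 2) := by
  rw [← Real.rpow_mul_natCast hb]
  congr 1
  push_cast
  ring

/-- The two-rate Gaussian rateless problem at rate `R`: with augmented
matrices `G₁ = diag(2^{R/2}, 1)` and `G₂ = diag(2^{R/4}, 2^{R/4})`, the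
Erez–Trott–Wornell precoder
`V = (2^{R/2} + 1)^{-1/2} !![1, 2^{R/4}; 2^{R/4}, -1]` is orthogonal, and there
are real orthogonal `U₁, U₂` such that each `Uᵢᵀ Gᵢ V` is upper triangular with
both diagonal entries equal to `2^{R/4}`. -/
theorem two_rate_rateless_jet (R : ℝ) (hR : 0 < R) :
    ((Real.sqrt ((2 : ℝ) ^ (R / 2) + 1))⁻¹ •
        !![(1 : ℝ), (2 : ℝ) ^ (R / 4); (2 : ℝ) ^ (R / 4), -1])ᵀ *
      ((Real.sqrt ((2 : ℝ) ^ (R / 2) + 1))⁻¹ •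
        !![(1 : ℝ), (2 : ℝ) ^ (R / 4); (2 : ℝ) ^ (R / 4), -1]) = 1 ∧
    ∃ U₁ U₂ : Matrix (Fin 2) (Fin 2) ℝ,
      U₁ᵀ * U₁ = 1 ∧ U₂ᵀ * U₂ = 1 ∧
      (∀ k l : Fin 2, l < k →
        (U₁ᵀ * !![(2 : ℝ) ^ (R / 2), 0; 0, 1] *
          ((Real.sqrt ((2 : ℝ) ^ (R / 2) + 1))⁻¹ •
            !![(1 : ℝ), (2 : ℝ) ^ (R / 4); (2 : ℝ) ^ (R / 4), -1])) k l = 0) ∧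
      (∀ k : Fin 2,
        (U₁ᵀ * !![(2 : ℝ) ^ (R / 2), 0; 0, 1] *
          ((Real.sqrt ((2 : ℝ) ^ (R / 2) + 1))⁻¹ •
            !![(1 : ℝ), (2 : ℝ) ^ (R / 4); (2 : ℝ) ^ (R / 4), -1])) k k =
          (2 : ℝ) ^ (R / 4)) ∧
      (∀ k l : Fin 2, l < k →
        (U₂ᵀ * !![(2 : ℝ) ^ (R / 4), 0; 0, (2 : ℝ) ^ (R / 4)] *
          ((Real.sqrt ((2 : ℝ) ^ (R / 2) + 1))⁻¹ •
            !![(1 : ℝ), (2 : ℝ) ^ (R / 4); (2 : ℝ) ^ (R / 4), -1])) k l = 0) ∧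
      (∀ k : Fin 2,
        (U₂ᵀ * !![(2 : ℝ) ^ (R / 4), 0; 0, (2 : ℝ) ^ (R / 4)] *
          ((Real.sqrt ((2 : ℝ) ^ (R / 2) + 1))⁻¹ •
            !![(1 : ℝ), (2 : ℝ) ^ (R / 4); (2 : ℝ) ^ (R / 4), -1])) k k =
          (2 : ℝ) ^ (R / 4)) := by
  have sq_gain := rpow_div_four_sq (zero_le_two (α := ℝ)) R
  have hc : (√((2 : ℝ) ^ (R / 2) + 1))⁻¹ ^ 2 * (((2 : ℝ) ^ (R / 4)) ^ 2 + 1) = 1 := by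
    rw [sq_gain, inv_sqrt_sq_mul_self (by positivity)]
  obtain ⟨hV, U₁, U₂, h₁, h₂⟩ := two_rate_rateless_jet_general hc
  exact ⟨hV, U₁, U₂, h₁.orthogonal, h₂.orthogonal, sq_gain ▸ h₁.upperTriangular,
    sq_gain ▸ h₁.diag_eq, h₂.upperTriangular, h₂.diag_eq⟩
end
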